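/- arXiv:1205.6770 — 3 statements merged into one kernel-verified Lean document; each statement's English description precedes it below -/
import Mathlib

section
/- Let (R,m) be a complete Noetherian local ring of dimension ≥ 2 with canonical module K_R, let S = Hom_R(K_R,K_R), and let φ: R → S be the natural map φ(a)(x) = ax. If Ass R ⊆ Assh R ∪ {m}, then ker φ has finite length and H¹_m(R) ≅ H⁰_m(coker φ); in particular H¹_m(R) has finite length. -/
open IsLocalRing Filter Function CategoryTheory

universe u

section Defs

variable (R : Type u) [CommRing R]

/-- The length of a module, as the Krull dimension of its lattice of submodules. -/
noncomputable def mlen (M : Type u) [AddCommGroup M] [Module R M] : WithBot ℕ∞ :=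
  Order.krullDim (Submodule R M)

/-- The (Krull) dimension of a module. -/
noncomputable def mdim (M : Type u) [AddCommGroup M] [Module R M] : WithBot ℕ∞ :=
  ringKrullDim (R ⧸ Module.annihilator R M)

/-- The depth of `M` with respect to an ideal `I`: the supremum of the lengths of
`M`-regular sequences consisting of elements of `I`. -/
noncomputable def idepth (I : Ideal R) (M : Type u) [AddCommGroup M] [Module R M] : ℕ∞ :=
  sSup {n : ℕ∞ | ∃ rs : List R, (rs.length : ℕ∞) = n ∧ (∀ r ∈ rs, r ∈ I) ∧
    RingTheory.Sequence.IsRegular M rs}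

/-- The depth of a module over a local ring. -/
noncomputable def mdepth [IsLocalRing R] (M : Type u) [AddCommGroup M] [Module R M] : ℕ∞ :=
  idepth R (maximalIdeal R) M

/-- A Cohen–Macaulay module over a local ring: depth = dimension. -/
def IsCMMod [IsLocalRing R] (M : Type u) [AddCommGroup M] [Module R M] : Prop :=
  (mdepth R M : WithBot ℕ∞) = mdim R M

/-- A Cohen–Macaulay local ring. -/
def IsCMRing [IsLocalRing R] : Prop := (mdepth R R : WithBot ℕ∞) = ringKrullDim R

/-- A maximal Cohen–Macaulay module: finite with depth = dim R. -/
def IsMCMMod [IsLocalRing R] (M : Type u) [AddCommGroup M] [Module R M] : Prop :=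
  Module.Finite R M ∧ (mdepth R M : WithBot ℕ∞) = ringKrullDim R

/-- `H⁰_m(M)`: the submodule of elements killed by a power of the maximal ideal. -/
def H0 [IsLocalRing R] (M : Type u) [AddCommGroup M] [Module R M] : Submodule R M :=
  ⨆ n : ℕ, Submodule.torsionBySet R M ((maximalIdeal R ^ n : Ideal R) : Set R)

/-- The `i`-th local cohomology of `M` with support in the maximal ideal. -/
noncomputable def lcoh [IsLocalRing R] (i : ℕ) (M : Type u) [AddCommGroup M] [Module R M] :
    ModuleCat.{u} R :=
  (localCohomology (maximalIdeal R) i).obj (ModuleCat.of R M)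

/-- The value at `n` of the Hilbert–Samuel polynomial in dimension `d` with coefficients
`e 0, …, e d`:  `∑ (-1)^i eᵢ C(n+d-1-i, d-i)`. -/
def hsPoly (d : ℕ) (e : ℕ → ℤ) (n : ℕ) : ℤ :=
  ∑ i ∈ Finset.range (d + 1), (-1 : ℤ) ^ i * e i * ((n + d - 1 - i).choose (d - i) : ℤ)

/-- `I` is a parameter ideal for `M` of dimension `d`: generated by `d` elements with
`M/IM` of finite length. -/
def IsParameterIdeal [IsLocalRing R] (I : Ideal R) (d : ℕ) (M : Type u) [AddCommGroup M]
    [Module R M] : Prop :=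
  (∃ a : Fin d → R, I = Ideal.span (Set.range a)) ∧ mlen R (M ⧸ (I • (⊤ : Submodule R M))) < ⊤

/-- `ℓ` records the Hilbert–Samuel function of `I` on `M`:  `ℓ n = λ(M/IⁿM)`. -/
def IsHilbSeq (I : Ideal R) (M : Type u) [AddCommGroup M] [Module R M] (ℓ : ℕ → ℕ) : Prop :=
  ∀ n : ℕ, mlen R (M ⧸ (I ^ n • (⊤ : Submodule R M))) = ((ℓ n : ℕ∞) : WithBot ℕ∞)

/-- `e 0, …, e d` are the Hilbert coefficients of `I` on `M`: the Hilbert–Samuel function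
eventually agrees with the Hilbert–Samuel polynomial with these coefficients. -/
def HasHilbCoeffs (I : Ideal R) (M : Type u) [AddCommGroup M] [Module R M] (d : ℕ)
    (e : ℕ → ℤ) : Prop :=
  ∃ ℓ : ℕ → ℕ, IsHilbSeq R I M ℓ ∧ ∀ᶠ n in atTop, (ℓ n : ℤ) = hsPoly d e n

/-- A local ring is unmixed if every associated prime of its completion has
dimension equal to `dim R`. -/
def Unmixed [IsLocalRing R] : Prop :=
  ∀ p ∈ associatedPrimes (AdicCompletion (maximalIdeal R) R)
      (AdicCompletion (maximalIdeal R) R),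
    ringKrullDim ((AdicCompletion (maximalIdeal R) R) ⧸ p) = ringKrullDim R

/-- The height of an ideal: the infimum of the heights of the primes containing it. -/
noncomputable def idealHeight (I : Ideal R) : ℕ∞ :=
  ⨅ p ∈ {p : PrimeSpectrum R | I ≤ p.asIdeal}, Order.height p

/-- A regular local ring: the maximal ideal is generated by `dim R` elements. -/
def IsRegularLocal [IsLocalRing R] : Prop :=
  ∃ s : Finset R, Ideal.span (s : Set R) = maximalIdeal R ∧
    ((s.card : ℕ∞) : WithBot ℕ∞) = ringKrullDim R

end Defs
/-- `E` is an injective hull of the residue field of `R`: an injective module containing the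
residue field as an essential submodule. -/
def IsResidueFieldInjHull (R E : Type u) [CommRing R] [IsLocalRing R] [AddCommGroup E]
    [Module R E] : Prop :=
  Module.Injective R E ∧ ∃ f : IsLocalRing.ResidueField R →ₗ[R] E, Function.Injective f ∧
    ∀ N : Submodule R E, N ≠ ⊥ → N ⊓ LinearMap.range f ≠ ⊥

/-- `K` is a canonical module of the `d`-dimensional local ring `R`: the Matlis dual of the
top local cohomology `H^d_m(R)`. -/
def IsCanonicalModule (R : Type u) [CommRing R] [IsLocalRing R] (d : ℕ) (K : Type u)
    [AddCommGroup K] [Module R K] : Prop :=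
  Module.Finite R K ∧ ∃ (E : Type u) (_ : AddCommGroup E) (_ : Module R E),
    IsResidueFieldInjHull R E ∧ Nonempty (K ≃ₗ[R] ((lcoh R d R) →ₗ[R] E))


section Cmp
open Opposite

variable {R : Type u} [CommRing R]

/-- the cochain map induced on `Hom(P,Y)` by a chain map. -/
noncomputable def lyMap {P P' : ChainComplex (ModuleCat.{u} R) ℕ} (φ : P' ⟶ P) (Y : ModuleCat.{u} R) :
    P.linearYonedaObj R Y ⟶ P'.linearYonedaObj R Y :=
  (HomologicalComplex.unopFunctor (ModuleCat.{u} R) _).map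
    ((((linearYoneda R (ModuleCat.{u} R)).obj Y).rightOp.mapHomologicalComplex _).map φ).op

theorem lyMap_apply {P P' : ChainComplex (ModuleCat.{u} R) ℕ} (φ : P' ⟶ P) (Y : ModuleCat.{u} R)
    (n : ℕ) (z : P.X n ⟶ Y) :
    ((lyMap φ Y).f n).hom z = φ.f n ≫ z := rfl

theorem gen_sq {C : Type*} [Category C] {A A' B B' D D' : C} (a : A ⟶ A') (b : A ⟶ B) (b' : A' ⟶ B')
    (c : B ⟶ B') (d : B ≅ D) (d' : B' ≅ D') (e : D ⟶ D')
    (h1 : a ≫ b' = b ≫ c) (h2 : d.inv ≫ c = e ≫ d'.inv) :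
    a ≫ (b' ≫ d'.hom) = (b ≫ d.hom) ≫ e := by
  rw [Iso.inv_comp_eq] at h2
  rw [← Category.assoc, h1, h2]; simp

theorem isoExt_nat {X X' Y : ModuleCat.{u} R} (g : X' ⟶ X) (P : ProjectiveResolution X)
    (P' : ProjectiveResolution X') (φ : P'.complex ⟶ P.complex)
    (comm : φ.f 0 ≫ P.π.f 0 = P'.π.f 0 ≫ g) (n : ℕ) :
    ((Ext R (ModuleCat.{u} R) n).map g.op).app Y ≫ (P'.isoExt n Y).hom =
      (P.isoExt n Y).hom ≫ HomologicalComplex.homologyMap (lyMap φ Y) n := by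
  have h1 := ProjectiveResolution.isoLeftDerivedObj_inv_naturality g P' P φ comm
    ((linearYoneda R (ModuleCat.{u} R)).obj Y).rightOp n
  have h2 := HomologicalComplex.homologyOp_hom_naturality (lyMap φ Y) n
  have h1' := congrArg Quiver.Hom.unop h1
  have h2' := congrArg Quiver.Hom.unop h2
  exact gen_sq _ _ _ _ ((P.complex.linearYonedaObj R Y).homologyOp n).unop.symm
    ((P'.complex.linearYonedaObj R Y).homologyOp n).unop.symm _ h1' h2'

section
variable {X Y : ModuleCat.{u} R} (P : ProjectiveResolution X)

/-- The underlying map of a cycle. -/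
noncomputable def icyc (n : ℕ) (w : (P.complex.linearYonedaObj R Y).cycles n) : P.complex.X n ⟶ Y :=
  ((P.complex.linearYonedaObj R Y).iCycles n).hom w

theorem cyc_hyp (n : ℕ) (w : (P.complex.linearYonedaObj R Y).cycles n) :
    P.complex.d (n+1) n ≫ icyc P n w = 0 := by
  have h := (P.complex.linearYonedaObj R Y).iCycles_d n (n+1)
  exact congrArg (fun f => f.hom w) h

theorem extMk_congr {n : ℕ} {f f' : P.complex.X n ⟶ Y} (h : f = f') (m : ℕ) (hm : n + 1 = m)
    (hf : P.complex.d m n ≫ f = 0) (hf' : P.complex.d m n ≫ f' = 0) :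
    P.extMk f m hm hf = P.extMk f' m hm hf' := by subst h; rfl

/-- From cycles to the `Ext`-group. -/
noncomputable def kap (n : ℕ) :
    (P.complex.linearYonedaObj R Y).cycles n →ₗ[R] Abelian.Ext X Y n where
  toFun w := P.extMk (icyc P n w) (n+1) rfl (cyc_hyp P n w)
  map_add' w w' := by
    rw [P.add_extMk]; congr 1; exact map_add ((P.complex.linearYonedaObj R Y).iCycles n).hom w w'
  map_smul' r w := by
    rw [RingHom.id_apply, Abelian.Ext.smul_eq_comp_mk₀, P.extMk_comp_mk₀]; congr 1
    rw [Linear.comp_smul, Category.comp_id]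
    exact map_smul ((P.complex.linearYonedaObj R Y).iCycles n).hom r w

theorem kap_surj (n : ℕ) : Function.Surjective (kap (Y := Y) P n) := by
  intro x
  obtain ⟨f, hf, rfl⟩ := P.extMk_surjective x (n+1) rfl
  have hk : ((P.complex.linearYonedaObj R Y).d n (n+1)).hom f = 0 := hf
  let k : ModuleCat.of R R ⟶ (P.complex.linearYonedaObj R Y).X n :=
    ModuleCat.ofHom (LinearMap.toSpanSingleton R ((P.complex.linearYonedaObj R Y).X n) f)
  have hz : k ≫ (P.complex.linearYonedaObj R Y).d n (n+1) = 0 :=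
    ModuleCat.hom_ext (LinearMap.ext_ring
      ((congrArg ((P.complex.linearYonedaObj R Y).d n (n+1)).hom (one_smul R _)).trans hk))
  have := (P.complex.linearYonedaObj R Y).liftCycles_i k (n+1) (by simp) hz
  have h2 := congrArg (fun g => g.hom (1:R)) this
  refine ⟨((P.complex.linearYonedaObj R Y).liftCycles k (n+1) (by simp) hz).hom (1:R), ?_⟩
  exact extMk_congr P (h2.trans (one_smul R _)) _ _ (cyc_hyp P n _) hf

theorem kap_ker (p : ℕ) (w) : kap (Y := Y) P (p+1) w = 0 ↔
    ((P.complex.linearYonedaObj R Y).homologyπ (p+1)).hom w = 0 := by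
  have hinj : Function.Injective ((P.complex.linearYonedaObj R Y).iCycles (p+1)).hom :=
    (ModuleCat.mono_iff_injective _).1 inferInstance
  have hex : (ShortComplex.mk _ _ ((P.complex.linearYonedaObj R Y).toCycles_comp_homologyπ p (p+1))).Exact :=
    ShortComplex.exact_of_g_is_cokernel _
      ((P.complex.linearYonedaObj R Y).homologyIsCokernel p (p+1) (by simp))
  have key : ∀ g, ((P.complex.linearYonedaObj R Y).iCycles (p+1)).hom
      (((P.complex.linearYonedaObj R Y).toCycles p (p+1)).hom g) =
      ((P.complex.linearYonedaObj R Y).d p (p+1)).hom g := fun g =>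
    congrArg (fun h => h.hom g) ((P.complex.linearYonedaObj R Y).toCycles_i p (p+1))
  refine (P.extMk_eq_zero_iff (icyc P (p+1) w) (p+1+1) rfl (cyc_hyp P (p+1) w) p rfl).trans ⟨?_, ?_⟩
  · rintro ⟨g, hg⟩
    have : w = ((P.complex.linearYonedaObj R Y).toCycles p (p+1)).hom g :=
      hinj ((key g).trans hg).symm
    rw [this]
    exact congrArg (fun h => h.hom g) ((P.complex.linearYonedaObj R Y).toCycles_comp_homologyπ p (p+1))
  · intro h
    obtain ⟨g, hg⟩ := (ShortComplex.moduleCat_exact_iff _).1 hex w h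
    exact ⟨g, (key g).symm.trans (congrArg _ hg)⟩

theorem pi_surj (n : ℕ) : Function.Surjective ((P.complex.linearYonedaObj R Y).homologyπ n).hom :=
  (ModuleCat.epi_iff_surjective _).1 inferInstance

/-- Homology of `Hom(P,Y)` is `Ext`. -/
noncomputable def homEquivExt (p : ℕ) :
    (P.complex.linearYonedaObj R Y).homology (p+1) ≃ₗ[R] Abelian.Ext X Y (p+1) :=
  (LinearMap.quotKerEquivOfSurjective _ (pi_surj P (p+1))).symm ≪≫ₗ
    (Submodule.quotEquivOfEq _ _ (by ext w; exact (kap_ker P p w).symm)) ≪≫ₗ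
    (LinearMap.quotKerEquivOfSurjective _ (kap_surj P (p+1)))

theorem homEquivExt_pi (p : ℕ) (w) : homEquivExt (Y := Y) P p
    (((P.complex.linearYonedaObj R Y).homologyπ (p+1)).hom w) = kap P (p+1) w := by
  have : (LinearMap.quotKerEquivOfSurjective _ (pi_surj (Y := Y) P (p+1))).symm
    (((P.complex.linearYonedaObj R Y).homologyπ (p+1)).hom w) = Submodule.Quotient.mk w := by
    rw [LinearEquiv.symm_apply_eq]; rfl
  simp only [homEquivExt, LinearEquiv.trans_apply]
  erw [this]
  rfl

end

theorem homEquivExt_nat {X X' Y : ModuleCat.{u} R} (g : X' ⟶ X) (P : ProjectiveResolution X)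
    (P' : ProjectiveResolution X') (φ : ProjectiveResolution.Hom P' P g) (p : ℕ)
    (x : (P.complex.linearYonedaObj R Y).homology (p+1)) :
    homEquivExt P' p ((HomologicalComplex.homologyMap (lyMap φ.hom Y) (p+1)).hom x) =
      (Abelian.Ext.mk₀ g).comp (homEquivExt P p x) (zero_add _) := by
  obtain ⟨w, rfl⟩ := pi_surj P (p+1) x
  have h1 : (HomologicalComplex.homologyMap (lyMap φ.hom Y) (p+1)).hom
      (((P.complex.linearYonedaObj R Y).homologyπ (p+1)).hom w) =
      ((P'.complex.linearYonedaObj R Y).homologyπ (p+1)).hom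
      ((HomologicalComplex.cyclesMap (lyMap φ.hom Y) (p+1)).hom w) :=
    congrArg (fun h => h.hom w) (HomologicalComplex.homologyπ_naturality (lyMap φ.hom Y) (p+1))
  rw [h1, homEquivExt_pi, homEquivExt_pi]
  have h2 : ((P'.complex.linearYonedaObj R Y).iCycles (p+1)).hom
      ((HomologicalComplex.cyclesMap (lyMap φ.hom Y) (p+1)).hom w) =
      ((lyMap φ.hom Y).f (p+1)).hom (((P.complex.linearYonedaObj R Y).iCycles (p+1)).hom w) :=
    congrArg (fun h => h.hom w) (HomologicalComplex.cyclesMap_i (lyMap φ.hom Y) (p+1))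
  exact (extMk_congr P' h2 _ _ (cyc_hyp P' (p+1) _) (by
      rw [← cyc_hyp P' (p+1) ((HomologicalComplex.cyclesMap (lyMap φ.hom Y) (p+1)).hom w)]
      exact congrArg _ h2.symm)).trans
    (ProjectiveResolution.mk₀_comp_extMk (icyc P (p+1) w) (p+1+1) rfl (cyc_hyp P (p+1) w) φ).symm

/-- Comparison of the two versions of `Ext`. -/
noncomputable def extCmp (X Y : ModuleCat.{u} R) (p : ℕ) :
    ((Ext R (ModuleCat.{u} R) (p+1)).obj (op X)).obj Y ≃ₗ[R] Abelian.Ext X Y (p+1) :=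
  ((ProjectiveResolution.of X).isoExt (p+1) Y).toLinearEquiv ≪≫ₗ homEquivExt _ p

theorem extCmp_nat {X X' Y : ModuleCat.{u} R} (g : X' ⟶ X) (p : ℕ)
    (x : ((Ext R (ModuleCat.{u} R) (p+1)).obj (op X)).obj Y) :
    extCmp X' Y p ((((Ext R (ModuleCat.{u} R) (p+1)).map g.op).app Y).hom x) =
      (Abelian.Ext.mk₀ g).comp (extCmp X Y p x) (zero_add _) := by
  let P := ProjectiveResolution.of X
  let P' := ProjectiveResolution.of X'
  let φ : ProjectiveResolution.Hom P' P g := ⟨ProjectiveResolution.lift g P' P, (ProjectiveResolution.lift_commutes_zero g P' P).trans (by simp)⟩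
  have h := congrArg (fun h => h.hom x)
    (isoExt_nat (Y := Y) g P P' φ.hom (ProjectiveResolution.lift_commutes_zero g P' P) (p+1))
  have h2 := homEquivExt_nat g P P' φ p ((P.isoExt (p+1) Y).hom.hom x)
  exact (congrArg (homEquivExt P' p) h).trans h2

end Cmp


section LCmodel
open Opposite CategoryTheory.Abelian

variable {R : Type u} [CommRing R]

/-- the module `R/J^n`. -/
abbrev XJ (J : Ideal R) (n : ℕ) : ModuleCat.{u} R := ModuleCat.of R (R ⧸ J ^ n)

/-- transition map `R/J^m → R/J^n`. -/
noncomputable def trJ (J : Ideal R) {n m : ℕ} (h : n ≤ m) : XJ J m ⟶ XJ J n :=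
  (localCohomology.ringModIdeals (localCohomology.idealPowersDiagram J)).map (homOfLE h).op

theorem trJ_refl (J : Ideal R) (n : ℕ) : trJ J (le_refl n) = 𝟙 _ :=
  (localCohomology.ringModIdeals (localCohomology.idealPowersDiagram J)).map_id _

theorem trJ_trans (J : Ideal R) {n m k : ℕ} (h : n ≤ m) (h' : m ≤ k) :
    trJ J h' ≫ trJ J h = trJ J (h.trans h') :=
  ((localCohomology.ringModIdeals (localCohomology.idealPowersDiagram J)).map_comp
    (homOfLE h').op (homOfLE h).op).symm

/-- transition map on Ext. -/
noncomputable def LCf (J : Ideal R) (i : ℕ) (M : ModuleCat.{u} R) (n m : ℕ) (h : n ≤ m) :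
    Ext (XJ J n) M i →ₗ[R] Ext (XJ J m) M i :=
  Ext.precompOfLinear (Ext.mk₀ (trJ J h)) R M (zero_add i)

theorem LCf_apply (J : Ideal R) (i : ℕ) (M : ModuleCat.{u} R) (n m : ℕ) (h : n ≤ m) (x) :
    LCf J i M n m h x = (Ext.mk₀ (trJ J h)).comp x (zero_add i) := rfl

instance LCf_sys (J : Ideal R) (i : ℕ) (M : ModuleCat.{u} R) :
    DirectedSystem (fun n => Ext (XJ J n) M i) (fun n m h => LCf J i M n m h) where
  map_self n x := by rw [LCf_apply, trJ_refl, Ext.mk₀_id_comp]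
  map_map n m k h h' x := by
    rw [LCf_apply, LCf_apply, LCf_apply, ← trJ_trans J h h', ← Ext.mk₀_comp_mk₀]
    exact (Ext.comp_assoc _ _ _ _ _ (by omega)).symm

/-- Local cohomology as a direct limit. -/
def LC (J : Ideal R) (i : ℕ) (M : Type u) [AddCommGroup M] [Module R M] : Type u :=
  Module.DirectLimit (fun n => Ext (XJ J n) (ModuleCat.of R M) i) (LCf J i (ModuleCat.of R M))

noncomputable instance (J : Ideal R) (i : ℕ) (M : Type u) [AddCommGroup M] [Module R M] :
    AddCommGroup (LC J i M) := inferInstanceAs (AddCommGroup (Module.DirectLimit _ _))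
noncomputable instance (J : Ideal R) (i : ℕ) (M : Type u) [AddCommGroup M] [Module R M] :
    Module R (LC J i M) := inferInstanceAs (Module R (Module.DirectLimit _ _))

variable {M N P : Type u} [AddCommGroup M] [Module R M] [AddCommGroup N] [Module R N]
  [AddCommGroup P] [Module R P] (J : Ideal R)

variable (M) in
/-- structure map -/
noncomputable def LCof (i n : ℕ) : Ext (XJ J n) (ModuleCat.of R M) i →ₗ[R] LC J i M :=
  Module.DirectLimit.of R ℕ _ (LCf J i (ModuleCat.of R M)) n

theorem LCof_f (i n m : ℕ) (h : n ≤ m) (x) :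
    LCof M J i m (LCf J i _ n m h x) = LCof M J i n x := Module.DirectLimit.of_f

theorem LC_exists (i : ℕ) (z : LC J i M) : ∃ n x, LCof M J i n x = z :=
  Module.DirectLimit.exists_of z

theorem LC_zero_exact (i n : ℕ) (x) (h : LCof M J i n x = 0) : ∃ m, ∃ h : n ≤ m,
    LCf J i _ n m h x = 0 := Module.DirectLimit.of.zero_exact h

/-- map induced by an Ext class. -/
noncomputable def LCpost {i j k : ℕ} (e : Ext (ModuleCat.of R M) (ModuleCat.of R N) k) (h : i + k = j) :
    LC J i M →ₗ[R] LC J j N :=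
  Module.DirectLimit.map (fun n => Ext.postcompOfLinear e R (XJ J n) h) (by
    intro n m hnm; ext x
    exact (Ext.comp_assoc (Ext.mk₀ (trJ J hnm)) x e (zero_add i) h (by omega)))

theorem LCpost_of {i j k : ℕ} (e : Ext (ModuleCat.of R M) (ModuleCat.of R N) k) (h : i + k = j) (n x) :
    LCpost J e h (LCof M J i n x) = LCof N J j n (x.comp e h) :=
  Module.DirectLimit.map_apply_of _ _ _

/-- functoriality -/
noncomputable def LCmap (i : ℕ) (f : M →ₗ[R] N) : LC J i M →ₗ[R] LC J i N :=
  LCpost J (Ext.mk₀ (ModuleCat.ofHom f)) (add_zero i)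

theorem LCmap_of (i : ℕ) (f : M →ₗ[R] N) (n x) :
    LCmap J i f (LCof M J i n x) = LCof N J i n (x.comp (Ext.mk₀ (ModuleCat.ofHom f)) (add_zero i)) :=
  LCpost_of _ _ _ _ _

theorem LCmap_comp (i : ℕ) (f : M →ₗ[R] N) (g : N →ₗ[R] P) (z) :
    LCmap J i (g ∘ₗ f) z = LCmap J i g (LCmap J i f z) := by
  obtain ⟨n, x, rfl⟩ := LC_exists J i z
  rw [LCmap_of, LCmap_of, LCmap_of, ModuleCat.ofHom_comp, ← Ext.mk₀_comp_mk₀,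
    Ext.comp_assoc_of_third_deg_zero]

theorem LCmap_smul (i : ℕ) (r : R) (f : M →ₗ[R] N) : LCmap J i (r • f) = r • LCmap J i f := by
  ext z
  obtain ⟨n, x, rfl⟩ := LC_exists J i z
  rw [LinearMap.smul_apply, LCmap_of, LCmap_of, ← map_smul, ← Ext.comp_smul, ← Ext.mk₀_smul]; rfl

theorem LCmap_id (i : ℕ) : LCmap J i (LinearMap.id : M →ₗ[R] M) = LinearMap.id := by
  ext z
  obtain ⟨n, x, rfl⟩ := LC_exists J i z
  rw [LCmap_of, ModuleCat.ofHom_id, Ext.comp_mk₀_id]; rfl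

theorem LCmap_zero (i : ℕ) : LCmap J i (0 : M →ₗ[R] N) = 0 := by
  simpa using LCmap_smul J i (0:R) (0 : M →ₗ[R] N)

/-- functoriality for equivalences -/
noncomputable def LCequiv (i : ℕ) (e : M ≃ₗ[R] N) : LC J i M ≃ₗ[R] LC J i N :=
  LinearEquiv.ofLinearMap (LCmap J i e) (LCmap J i e.symm)
    (by ext z; rw [LinearMap.comp_apply, ← LCmap_comp]; simp [LCmap_id])
    (by ext z; rw [LinearMap.comp_apply, ← LCmap_comp]; simp [LCmap_id])

section les
variable {f : M →ₗ[R] N} {g : N →ₗ[R] P}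

theorem sesJ (he : Function.Exact f g) (hf : Function.Injective f) (hg : Function.Surjective g) :
  (ShortComplex.mk (ModuleCat.ofHom f) (ModuleCat.ofHom g)
    (by ext x; exact he.apply_apply_eq_zero x)).ShortExact where
  exact := (ShortComplex.moduleCat_exact_iff _).2 fun x hx => (he x).1 hx
  mono_f := (ModuleCat.mono_iff_injective _).2 hf
  epi_g := (ModuleCat.epi_iff_surjective _).2 hg

/-- the connecting map -/
noncomputable def LCd (he : Function.Exact f g) (hf : Function.Injective f)
    (hg : Function.Surjective g) (i : ℕ) : LC J i P →ₗ[R] LC J (i+1) M :=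
  LCpost J (sesJ he hf hg).extClass rfl

theorem LC_exact2 (he : Function.Exact f g) (hf : Function.Injective f)
    (hg : Function.Surjective g) (i : ℕ) : Function.Exact (LCmap J i f) (LCmap J i g) := by
  intro z
  constructor
  · intro h
    obtain ⟨n, x, rfl⟩ := LC_exists J i z
    rw [LCmap_of] at h
    obtain ⟨m, hnm, h⟩ := LC_zero_exact J i n _ h
    rw [LCf_apply, ← Ext.comp_assoc_of_third_deg_zero] at h
    obtain ⟨y, hy⟩ := Ext.covariant_sequence_exact₂ _ (sesJ he hf hg) _ h
    refine ⟨LCof M J i m y, ?_⟩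
    rw [LCmap_of, ← LCof_f J i n m hnm]
    exact congrArg _ hy
  · rintro ⟨y, rfl⟩
    rw [← LCmap_comp, he.linearMap_comp_eq_zero, LCmap_zero]; rfl

theorem LC_exact3 (he : Function.Exact f g) (hf : Function.Injective f)
    (hg : Function.Surjective g) (i : ℕ) : Function.Exact (LCmap J i g) (LCd J he hf hg i) := by
  intro z
  constructor
  · intro h
    obtain ⟨n, x, rfl⟩ := LC_exists J i z
    rw [LCd, LCpost_of] at h
    obtain ⟨m, hnm, h⟩ := LC_zero_exact J _ n _ h
    rw [LCf_apply, ← Ext.comp_assoc _ _ _ (zero_add i) rfl (by omega)] at h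
    obtain ⟨y, hy⟩ := Ext.covariant_sequence_exact₃ _ (sesJ he hf hg) _ _ h
    refine ⟨LCof N J i m y, ?_⟩
    rw [LCmap_of, ← LCof_f J i n m hnm]
    exact congrArg _ hy
  · rintro ⟨y, rfl⟩
    obtain ⟨n, x, rfl⟩ := LC_exists J i y
    rw [LCmap_of, LCd, LCpost_of, Ext.comp_assoc_of_second_deg_zero]
    have := (sesJ he hf hg).comp_extClass
    dsimp only at this
    rw [this, Ext.comp_zero, map_zero]

theorem LC_exact1 (he : Function.Exact f g) (hf : Function.Injective f)
    (hg : Function.Surjective g) (i : ℕ) : Function.Exact (LCd J he hf hg i) (LCmap J (i+1) f) := by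
  intro z
  constructor
  · intro h
    obtain ⟨n, x, rfl⟩ := LC_exists J _ z
    rw [LCmap_of] at h
    obtain ⟨m, hnm, h⟩ := LC_zero_exact J _ n _ h
    rw [LCf_apply, ← Ext.comp_assoc_of_third_deg_zero] at h
    obtain ⟨y, hy⟩ := Ext.covariant_sequence_exact₁ _ (sesJ he hf hg) _ h rfl
    refine ⟨LCof P J i m y, ?_⟩
    rw [LCd, LCpost_of, ← LCof_f J _ n m hnm]
    exact congrArg _ hy
  · rintro ⟨y, rfl⟩
    obtain ⟨n, x, rfl⟩ := LC_exists J i y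
    rw [LCd, LCpost_of, LCmap_of, Ext.comp_assoc_of_third_deg_zero]
    have := (sesJ he hf hg).extClass_comp
    dsimp only at this
    rw [this, Ext.comp_zero, map_zero]

end les

theorem LC_torsion (i : ℕ) (z : LC J i M) : ∃ n, ∀ r ∈ J ^ n, r • z = 0 := by
  obtain ⟨n, x, rfl⟩ := LC_exists J i z
  refine ⟨n, fun r hr => ?_⟩
  rw [← map_smul]
  have : r • x = (Ext.mk₀ (r • 𝟙 (XJ J n))).comp x (zero_add i) := by
    rw [Ext.mk₀_smul, Ext.smul_comp, Ext.mk₀_id_comp]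
  have h0 : r • 𝟙 (XJ J n) = 0 := by
    refine ModuleCat.hom_ext (LinearMap.ext fun y => ?_)
    obtain ⟨y, rfl⟩ := Ideal.Quotient.mk_surjective y
    change r • (Ideal.Quotient.mk (J^n) y) = 0
    rw [← Ideal.Quotient.mk_eq_mk, ← Submodule.Quotient.mk_smul, Submodule.Quotient.mk_eq_zero]
    exact Ideal.mul_mem_right _ _ hr
  rw [this, h0, Ext.mk₀_zero, Ext.zero_comp, map_zero]

theorem LC_injective (i : ℕ) [Module.Injective R M] (z : LC J (i+1) M) : z = 0 := by
  obtain ⟨n, x, rfl⟩ := LC_exists J _ z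
  have : CategoryTheory.Injective (ModuleCat.of R M) :=
    (Module.injective_iff_injective_object R M).1 inferInstance
  rw [Ext.eq_zero_of_injective x, map_zero]

variable (M) in
/-- evaluation at 1 -/
noncomputable def LCev : LC J 0 M →ₗ[R] M :=
  Module.DirectLimit.lift R ℕ _ _ (fun n =>
    (LinearMap.applyₗ (Ideal.Quotient.mk (J^n) 1 : R ⧸ J^n)) ∘ₗ
      (ModuleCat.homLinearEquiv (S := R) (M := XJ J n) (N := ModuleCat.of R M)).toLinearMap ∘ₗ
      (Ext.linearEquiv₀ (R := R)).toLinearMap) (by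
    intro n m h x
    obtain ⟨x, rfl⟩ := Ext.linearEquiv₀ (R := R).symm.surjective x
    rw [LCf_apply]
    have : (Ext.mk₀ (trJ J h)).comp (Ext.linearEquiv₀ (R := R).symm x) (zero_add 0) =
      Ext.linearEquiv₀ (R := R).symm (trJ J h ≫ x) := by
        rw [Ext.linearEquiv₀_symm_apply, Ext.linearEquiv₀_symm_apply, Ext.mk₀_comp_mk₀]
    rw [this]
    simp only [LinearMap.comp_apply, LinearEquiv.coe_coe, LinearEquiv.apply_symm_apply]
    rfl)

theorem LCev_of (n : ℕ) (x : XJ J n ⟶ ModuleCat.of R M) :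
    LCev M J (LCof M J 0 n (Ext.mk₀ x)) = x.hom (Ideal.Quotient.mk (J^n) 1 : R ⧸ J^n) := by
  refine (Module.DirectLimit.lift_of ..).trans ?_
  rw [← Ext.linearEquiv₀_symm_apply (R := R)]
  simp only [LinearMap.comp_apply, LinearEquiv.coe_coe, LinearEquiv.apply_symm_apply]
  rfl

theorem LC_exists0 (z : LC J 0 M) : ∃ n x, LCof M J 0 n (Ext.mk₀ x) = z := by
  obtain ⟨n, x, rfl⟩ := LC_exists J 0 z
  exact ⟨n, Ext.linearEquiv₀ (R := R) x, by rw [Ext.mk₀_linearEquiv₀_apply]⟩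

theorem LCev_nat (f : M →ₗ[R] N) (z) : LCev N J (LCmap J 0 f z) = f (LCev M J z) := by
  obtain ⟨n, x, rfl⟩ := LC_exists0 J z
  rw [LCmap_of, Ext.mk₀_comp_mk₀, LCev_of, LCev_of]; rfl

theorem LCev_inj : Function.Injective (LCev M J) := by
  rw [injective_iff_map_eq_zero]
  intro z hz
  obtain ⟨n, x, rfl⟩ := LC_exists0 J z
  rw [LCev_of] at hz
  have : x = 0 := by
    refine ModuleCat.hom_ext (LinearMap.ext fun y => ?_)
    obtain ⟨y, rfl⟩ := Ideal.Quotient.mk_surjective y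
    have : (Ideal.Quotient.mk (J^n) y) = y • (Ideal.Quotient.mk (J^n) 1) := by
      rw [← Ideal.Quotient.mk_eq_mk, ← Ideal.Quotient.mk_eq_mk, ← Submodule.Quotient.mk_smul]; simp
    rw [this, map_smul]
    erw [hz]
    simp
  rw [this, Ext.mk₀_zero, map_zero]

theorem LCev_range (a : M) : (∃ z, LCev M J z = a) ↔ ∃ n, ∀ r ∈ J ^ n, r • a = 0 := by
  constructor
  · rintro ⟨z, rfl⟩
    obtain ⟨n, hn⟩ := LC_torsion J 0 z
    exact ⟨n, fun r hr => by rw [← map_smul, hn r hr, map_zero]⟩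
  · rintro ⟨n, hn⟩
    refine ⟨LCof M J 0 n (Ext.mk₀ (ModuleCat.ofHom (Submodule.liftQ (J^n)
      (LinearMap.toSpanSingleton R M a) (fun r hr => hn r hr)))), ?_⟩
    rw [LCev_of]
    exact (Submodule.liftQ_apply _ _ _).trans (one_smul R a)

end LCmodel

section lcohCmp
open Opposite CategoryTheory.Abelian CategoryTheory.Limits

variable {R : Type u} [CommRing R] (J : Ideal R) (p : ℕ) (M : Type u) [AddCommGroup M] [Module R M]

/-- cocone -/
noncomputable def lcCocone : Cocone (localCohomology.diagram (localCohomology.idealPowersDiagram J) (p+1) ⋙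
    (evaluation _ _).obj (ModuleCat.of R M)) :=
  ((evaluation _ _).obj (ModuleCat.of R M)).mapCocone
    (colimit.cocone (localCohomology.diagram (localCohomology.idealPowersDiagram J) (p+1)))

noncomputable def lcIsColimit : IsColimit (lcCocone J p M) :=
  isColimitOfPreserves _ (colimit.isColimit _)

theorem lcCocone_pt : (lcCocone J p M).pt = (localCohomology J (p+1)).obj (ModuleCat.of R M) := rfl

/-- structure maps of the colimit. -/
noncomputable def lcι (n : ℕ) :
    ((Ext R (ModuleCat.{u} R) (p+1)).obj (op (XJ J n))).obj (ModuleCat.of R M) →ₗ[R]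
      (lcCocone J p M).pt := ((lcCocone J p M).ι.app (op (op n))).hom

theorem lcι_w {n m : ℕ} (h : n ≤ m) (y) : lcι J p M m
    ((((Ext R (ModuleCat.{u} R) (p+1)).map (trJ J h).op).app (ModuleCat.of R M)).hom y) =
    lcι J p M n y :=
  congrArg (fun k => k.hom y) ((lcCocone J p M).w (homOfLE h).op.op)

instance forget_filt : PreservesColimit (localCohomology.diagram (localCohomology.idealPowersDiagram J) (p + 1) ⋙
      (evaluation (ModuleCat R) (ModuleCat R)).obj (ModuleCat.of R M)) (forget (ModuleCat.{u} R)) := by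
  have h : PreservesFilteredColimitsOfSize.{0, 0} (forget (ModuleCat.{u} R)) :=
    preservesSmallestFilteredColimits_of_preservesFilteredColimits _
  exact (h.preserves_filtered_colimits _).preservesColimit

theorem lcι_surj (z) : ∃ n y, lcι J p M n y = z := by
  obtain ⟨j, y, rfl⟩ := Concrete.isColimit_exists_rep _ (lcIsColimit J p M) z
  exact ⟨j.unop.unop, y, rfl⟩

theorem lcι_eq (n : ℕ) (y y') (hz : lcι J p M n y = lcι J p M n y') : ∃ m, ∃ h : n ≤ m,
    (((Ext R (ModuleCat.{u} R) (p+1)).map (trJ J h).op).app (ModuleCat.of R M)).hom y =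
    (((Ext R (ModuleCat.{u} R) (p+1)).map (trJ J h).op).app (ModuleCat.of R M)).hom y' := by
  obtain ⟨k, f, g, h⟩ := Concrete.isColimit_exists_of_rep_eq
    (localCohomology.diagram (localCohomology.idealPowersDiagram J) (p+1) ⋙
      (evaluation _ _).obj (ModuleCat.of R M)) (i := op (op n)) (j := op (op n))
    (lcIsColimit J p M) y y' hz
  exact ⟨k.unop.unop, leOfHom f.unop.unop, h⟩

noncomputable def LCtoPt : LC J (p+1) M →ₗ[R] (lcCocone J p M).pt :=
  Module.DirectLimit.lift R ℕ _ _ (fun n =>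
    lcι J p M n ∘ₗ (extCmp (XJ J n) (ModuleCat.of R M) p).symm.toLinearMap) (by
    intro n m h x
    obtain ⟨y, rfl⟩ := (extCmp (XJ J n) (ModuleCat.of R M) p).surjective x
    rw [LCf_apply, ← extCmp_nat (trJ J h)]
    simp only [LinearMap.comp_apply, LinearEquiv.coe_coe, LinearEquiv.symm_apply_apply]
    exact lcι_w J p M h y)

theorem LCtoPt_of (n : ℕ) (x) : LCtoPt J p M (LCof M J (p+1) n x) =
   lcι J p M n ((extCmp (XJ J n) (ModuleCat.of R M) p).symm x) :=
  Module.DirectLimit.lift_of ..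

theorem LCtoPt_bij : Function.Bijective (LCtoPt J p M) := by
  constructor
  · rw [injective_iff_map_eq_zero]
    intro z hz
    obtain ⟨n, x, rfl⟩ := LC_exists J _ z
    obtain ⟨y, rfl⟩ := (extCmp (XJ J n) (ModuleCat.of R M) p).surjective x
    rw [LCtoPt_of, LinearEquiv.symm_apply_apply] at hz
    obtain ⟨m, h, h'⟩ := lcι_eq J p M n y 0 (hz.trans (map_zero _).symm)
    rw [← LCof_f J _ n m h, LCf_apply, ← extCmp_nat, h', map_zero, map_zero, map_zero]
  · intro z
    obtain ⟨n, y, rfl⟩ := lcι_surj J p M z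
    refine ⟨LCof M J (p+1) n (extCmp _ _ p y), ?_⟩
    rw [LCtoPt_of, LinearEquiv.symm_apply_apply]

noncomputable def lcohEquiv : LC J (p+1) M ≃ₗ[R] ((localCohomology J (p+1)).obj (ModuleCat.of R M)) :=
  LinearEquiv.ofBijective (LCtoPt J p M) (LCtoPt_bij J p M)

end lcohCmp


section Tors
variable {R : Type u} [CommRing R] (J : Ideal R)

/-- `J`-power torsion modules -/
def JT (M : Type u) [AddCommGroup M] [Module R M] : Prop := ∀ x : M, ∃ n, ∀ r ∈ J ^ n, r • x = 0

/-- `J`-power torsion submodule -/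
def Gam (M : Type u) [AddCommGroup M] [Module R M] : Submodule R M where
  carrier := {x | ∃ n, ∀ r ∈ J ^ n, r • x = 0}
  zero_mem' := ⟨0, by simp⟩
  add_mem' := by
    rintro a b ⟨n, hn⟩ ⟨m, hm⟩
    refine ⟨max n m, fun r hr => ?_⟩
    rw [smul_add, hn r (Ideal.pow_le_pow_right (le_max_left _ _) hr),
      hm r (Ideal.pow_le_pow_right (le_max_right _ _) hr), add_zero]
  smul_mem' := by
    rintro c a ⟨n, hn⟩
    exact ⟨n, fun r hr => by rw [smul_comm, hn r hr, smul_zero]⟩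

variable {M N P : Type u} [AddCommGroup M] [Module R M] [AddCommGroup N] [Module R N]
  [AddCommGroup P] [Module R P]

theorem mem_Gam {x : M} : x ∈ Gam J M ↔ ∃ n, ∀ r ∈ J ^ n, r • x = 0 := Iff.rfl

theorem Gam_JT : JT J (Gam J M) := by
  rintro ⟨x, n, hn⟩
  exact ⟨n, fun r hr => Subtype.ext (hn r hr)⟩

theorem JT.of_surj {f : M →ₗ[R] N} (hf : Surjective f) (h : JT J M) : JT J N := by
  intro y
  obtain ⟨x, rfl⟩ := hf y
  obtain ⟨n, hn⟩ := h x
  exact ⟨n, fun r hr => by rw [← map_smul, hn r hr, map_zero]⟩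

theorem JT.of_inj {f : M →ₗ[R] N} (hf : Injective f) (h : JT J N) : JT J M := by
  intro y
  obtain ⟨n, hn⟩ := h (f y)
  exact ⟨n, fun r hr => hf (by rw [map_smul, hn r hr, map_zero])⟩

theorem JT.fg [Module.Finite R M] (h : JT J M) : ∃ n, ∀ x : M, ∀ r ∈ J ^ n, r • x = 0 := by
  obtain ⟨s, hs⟩ := (Module.Finite.fg_top : (⊤ : Submodule R M).FG)
  choose k hk using h
  refine ⟨s.sup k, fun x r hr => ?_⟩
  have : (⊤ : Submodule R M) ≤ LinearMap.ker (LinearMap.lsmul R M r) := by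
    rw [← hs, Submodule.span_le]
    intro y hy
    exact hk y r (Ideal.pow_le_pow_right (Finset.le_sup hy) hr)
  exact this (Submodule.mem_top (x := x))

theorem Gam_injective [IsNoetherianRing R] [Module.Injective R M] : Module.Injective R (Gam J M) := by
  apply Module.Baer.injective
  intro a f
  obtain ⟨n, hn⟩ := JT.fg J (M := LinearMap.range f)
    (JT.of_inj J (LinearMap.range f).injective_subtype (Gam_JT J (M := M)))
  obtain ⟨k, hk⟩ := Ideal.exists_pow_inf_eq_pow_smul J a
  have hAR : J ^ (n + k) ⊓ a ≤ J ^ n * a := by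
    have := hk (n + k) (by omega)
    rw [smul_eq_mul, Ideal.mul_top, Nat.add_sub_cancel] at this
    rw [this]
    exact Ideal.mul_mono_right inf_le_right
  let g0 : a →ₗ[R] (R ⧸ J ^ (n+k)) := (Submodule.mkQ (J^(n+k))) ∘ₗ a.subtype
  have hker : LinearMap.ker g0 ≤ LinearMap.ker f := by
    intro x hx
    have hx1 : (x : R) ∈ J ^ (n+k) := by
      exact (Submodule.Quotient.mk_eq_zero _).1 hx
    have hx2 := hAR ⟨hx1, x.2⟩
    have : J ^ n * a ≤ (LinearMap.ker f).map a.subtype := by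
      rw [Ideal.mul_le]
      intro r hr s hs
      refine ⟨r • ⟨s, hs⟩, ?_, rfl⟩
      rw [SetLike.mem_coe, LinearMap.mem_ker, map_smul]
      exact congrArg Subtype.val (hn ⟨f ⟨s, hs⟩, _, rfl⟩ r hr)
    obtain ⟨y, hy, hxy⟩ := this hx2
    rwa [← Subtype.ext hxy]
  let f' : (a ⧸ LinearMap.ker g0) →ₗ[R] M := (Gam J M).subtype ∘ₗ (LinearMap.ker g0).liftQ f hker
  let g' : (a ⧸ LinearMap.ker g0) →ₗ[R] (R ⧸ J ^ (n+k)) := (LinearMap.ker g0).liftQ g0 le_rfl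
  have hg' : Injective g' := LinearMap.ker_eq_bot.1 (Submodule.ker_liftQ_eq_bot _ _ _ le_rfl)
  obtain ⟨h, hh⟩ := Module.Injective.out g' hg' f'
  have hJ : JT J (R ⧸ J ^ (n+k)) := by
    intro x
    obtain ⟨x, rfl⟩ := Submodule.mkQ_surjective _ x
    refine ⟨n+k, fun r hr => ?_⟩
    rw [← map_smul, Submodule.mkQ_apply, Submodule.Quotient.mk_eq_zero]
    exact Ideal.mul_mem_right _ _ hr
  refine ⟨(h ∘ₗ Submodule.mkQ (J^(n+k))).codRestrict (Gam J M) (fun x => ?_), fun x hx => ?_⟩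
  · obtain ⟨n, hn⟩ := hJ (Submodule.mkQ (J^(n+k)) x)
    exact ⟨n, fun r hr => by rw [LinearMap.comp_apply, ← map_smul, hn r hr, map_zero]⟩
  · refine Subtype.ext ?_
    exact hh (Submodule.Quotient.mk ⟨x, hx⟩)

theorem exists_inj (M : Type u) [AddCommGroup M] [Module R M] : ∃ (I : Type u) (_ : AddCommGroup I)
    (_ : Module R I) (f : M →ₗ[R] I), Module.Injective R I ∧ Injective f := by
  let I : ModuleCat.{u} R := CategoryTheory.Injective.under (ModuleCat.of R M)
  refine ⟨I, inferInstance, inferInstance,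
    (CategoryTheory.Injective.ι (ModuleCat.of R M)).hom, ?_, ?_⟩
  · exact (Module.injective_iff_injective_object R I).2
      (inferInstanceAs (CategoryTheory.Injective (CategoryTheory.Injective.under (ModuleCat.of R M))))
  · exact (ModuleCat.mono_iff_injective _).1 inferInstance

section les
variable {f : M →ₗ[R] N} {g : N →ₗ[R] P}

theorem LC_surj (he : Function.Exact f g) (hf : Injective f) (hg : Surjective g) (i : ℕ) (h : Subsingleton (LC J (i+1) M)) : Surjective (LCmap J i g) := fun z =>
  (LC_exact3 J he hf hg i z).1 (Subsingleton.elim _ _)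

theorem LC_surj' (he : Function.Exact f g) (hf : Injective f) (hg : Surjective g) (i : ℕ) (h : Subsingleton (LC J i P)) : Surjective (LCmap J i f) := fun z =>
  (LC_exact2 J he hf hg i z).1 (Subsingleton.elim _ _)

theorem LC_inj (he : Function.Exact f g) (hf : Injective f) (hg : Surjective g) (i : ℕ) (h : Subsingleton (LC J i P)) : Injective (LCmap J (i+1) f) := by
  rw [injective_iff_map_eq_zero]
  intro z hz
  obtain ⟨y, rfl⟩ := (LC_exact1 J he hf hg i z).1 hz
  rw [Subsingleton.elim y 0, map_zero]

theorem LC_inj' (he : Function.Exact f g) (hf : Injective f) (hg : Surjective g) (i : ℕ) (h : Subsingleton (LC J i M)) : Injective (LCmap J i g) := by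
  rw [injective_iff_map_eq_zero]
  intro z hz
  obtain ⟨y, rfl⟩ := (LC_exact2 J he hf hg i z).1 hz
  rw [Subsingleton.elim y 0, map_zero]

theorem LCd_inj (he : Function.Exact f g) (hf : Injective f) (hg : Surjective g) (i : ℕ) (h : Subsingleton (LC J i N)) : Injective (LCd J he hf hg i) := by
  rw [injective_iff_map_eq_zero]
  intro z hz
  obtain ⟨y, rfl⟩ := (LC_exact3 J he hf hg i z).1 hz
  rw [Subsingleton.elim y 0, map_zero]

theorem LCd_surj (he : Function.Exact f g) (hf : Injective f) (hg : Surjective g) (i : ℕ) (h : Subsingleton (LC J (i+1) N)) : Surjective (LCd J he hf hg i) := fun z =>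
  (LC_exact1 J he hf hg i z).1 (Subsingleton.elim _ _)

end les

theorem JT.LC0_surj {f : M →ₗ[R] N} (h : JT J M) (hf : Surjective f) : Surjective (LCmap J 0 f) := by
  intro z
  obtain ⟨x, hx⟩ := hf (LCev N J z)
  obtain ⟨w, hw⟩ := (LCev_range J x).2 (h x)
  refine ⟨w, LCev_inj J ?_⟩
  rw [LCev_nat, hw, hx]

theorem JT.LC_vanish [IsNoetherianRing R] (i : ℕ) : ∀ (X : Type u) [AddCommGroup X] [Module R X],
    JT J X → Subsingleton (LC J (i+1) X) := by
  induction i with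
  | zero =>
    intro X _ _ hX
    obtain ⟨I, _, _, f, hI, hf⟩ := exists_inj (R := R) X
    have hfG : ∀ x, f x ∈ Gam J I := fun x => by
      obtain ⟨n, hn⟩ := hX x
      exact ⟨n, fun r hr => by rw [← map_smul, hn r hr, map_zero]⟩
    let f' := f.codRestrict (Gam J I) hfG
    have hf' : Injective f' := fun a b h => hf (congrArg Subtype.val h)
    have he : Function.Exact f' (LinearMap.range f').mkQ := LinearMap.exact_map_mkQ_range f'
    have hs := Submodule.mkQ_surjective (LinearMap.range f')
    have := Gam_injective J (M := I)
    refine subsingleton_of_forall_eq 0 fun z => ?_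
    obtain ⟨y, rfl⟩ := (LC_exact1 J he hf' hs 0 z).1 (LC_injective J _ _)
    obtain ⟨w, rfl⟩ := JT.LC0_surj J (Gam_JT J) hs y
    exact (LC_exact3 J he hf' hs 0).apply_apply_eq_zero w
  | succ i ih =>
    intro X _ _ hX
    obtain ⟨I, _, _, f, hI, hf⟩ := exists_inj (R := R) X
    have hfG : ∀ x, f x ∈ Gam J I := fun x => by
      obtain ⟨n, hn⟩ := hX x
      exact ⟨n, fun r hr => by rw [← map_smul, hn r hr, map_zero]⟩
    let f' := f.codRestrict (Gam J I) hfG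
    have hf' : Injective f' := fun a b h => hf (congrArg Subtype.val h)
    have he : Function.Exact f' (LinearMap.range f').mkQ := LinearMap.exact_map_mkQ_range f'
    have hs := Submodule.mkQ_surjective (LinearMap.range f')
    have := Gam_injective J (M := I)
    refine subsingleton_of_forall_eq 0 fun z => ?_
    obtain ⟨y, rfl⟩ := (LC_exact1 J he hf' hs _ z).1 (LC_injective J _ _)
    have := ih _ (JT.of_surj J hs (Gam_JT J))
    rw [Subsingleton.elim y 0, map_zero]

theorem exact_sub (K : Submodule R M) : Function.Exact K.subtype K.mkQ := LinearMap.exact_subtype_mkQ K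

/-- Passing to the quotient by a torsion submodule. -/
theorem LC_mkQ_bij [IsNoetherianRing R] (K : Submodule R M) (hK : JT J K) (i : ℕ) :
    Bijective (LCmap J (i+1) K.mkQ) :=
  ⟨LC_inj' J (exact_sub K) K.injective_subtype K.mkQ_surjective _ (JT.LC_vanish J i _ hK),
   LC_surj J (exact_sub K) K.injective_subtype K.mkQ_surjective _ (JT.LC_vanish J (i+1) _ hK)⟩

theorem LC0_zero (h : Gam J M = ⊥) : Subsingleton (LC J 0 M) := by
  refine subsingleton_of_forall_eq 0 fun z => LCev_inj J ?_
  have : LCev M J z ∈ Gam J M := (LCev_range J _).1 ⟨z, rfl⟩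
  rw [h] at this
  rw [map_zero]; exact this

/-- multiplication map exact sequence -/
theorem smul_exact (x : R) : Function.Exact (LinearMap.lsmul R M x) (LinearMap.range (LinearMap.lsmul R M x)).mkQ :=
  LinearMap.exact_map_mkQ_range _

theorem LCmap_lsmul (i : ℕ) (x : R) (z : LC J i M) : LCmap J i (LinearMap.lsmul R M x) z = x • z := by
  have : LinearMap.lsmul R M x = x • LinearMap.id := by ext; simp
  rw [this, LCmap_smul, LCmap_id]; rfl

theorem LC_inj_smul_zero {i : ℕ} {x : R} (hx : x ∈ J) (h : ∀ z : LC J i M, x • z = 0 → z = 0) :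
    Subsingleton (LC J i M) := by
  refine subsingleton_of_forall_eq 0 fun z => ?_
  obtain ⟨n, hn⟩ := LC_torsion J i z
  have : ∀ k, x ^ k • z = 0 → z = 0 := by
    intro k
    induction k with
    | zero => simp
    | succ k ih => intro h'; rw [pow_succ', mul_smul] at h'; exact ih (h _ h')
  exact this n (hn _ (Ideal.pow_mem_pow hx n))

end Tors


section Van
open Pointwise

variable {R : Type u} [CommRing R] 
variable {M N P : Type u} [AddCommGroup M] [Module R M] [AddCommGroup N] [Module R N]
  [AddCommGroup P] [Module R P]

theorem mem_smul_top_iff (x : R) (a : M) : a ∈ x • (⊤ : Submodule R M) ↔ ∃ b, x • b = a := by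
  rw [Submodule.mem_smul_pointwise_iff_exists]; simp

theorem qst_exact (x : R) : Function.Exact (LinearMap.lsmul R M x) (x • (⊤ : Submodule R M)).mkQ := by
  intro a
  rw [Submodule.mkQ_apply, Submodule.Quotient.mk_eq_zero, mem_smul_top_iff]; rfl

theorem lsmul_inj {x : R} (hx : IsSMulRegular M x) : Injective (LinearMap.lsmul R M x) := hx

theorem wb_lem {a : WithBot ℕ∞} {n : ℕ} (h : a + 1 ≤ ((n+1 : ℕ) : WithBot ℕ∞)) : a ≤ (n : WithBot ℕ∞) := by
  induction a with
  | bot => exact bot_le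
  | coe a =>
    have h' : ((a + 1 : ℕ∞) : WithBot ℕ∞) ≤ (((n + 1 : ℕ) : ℕ∞) : WithBot ℕ∞) := h
    rw [WithBot.coe_le_coe] at h'
    change (a : WithBot ℕ∞) ≤ ((n : ℕ∞) : WithBot ℕ∞)
    rw [WithBot.coe_le_coe]
    rw [Nat.cast_add, Nat.cast_one] at h'
    exact (ENat.add_le_add_iff_right ENat.one_ne_top).1 h'

theorem wb_lem0 {a : WithBot ℕ∞} (h : a + 1 ≤ ((0 : ℕ) : WithBot ℕ∞)) : a = ⊥ := by
  induction a with
  | bot => rfl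
  | coe a =>
    have h' : ((a + 1 : ℕ∞) : WithBot ℕ∞) ≤ (((0 : ℕ) : ℕ∞) : WithBot ℕ∞) := h
    rw [WithBot.coe_le_coe] at h'
    simp at h'

theorem LC_sub_of_sub (J : Ideal R) (i : ℕ) [Subsingleton M] : Subsingleton (LC J i M) := by
  refine subsingleton_of_forall_eq 0 fun z => ?_
  have : (LinearMap.id : M →ₗ[R] M) = 0 := Subsingleton.elim _ _
  have h := LCmap_id (M := M) J i
  rw [this, LCmap_zero] at h
  exact (LinearMap.congr_fun h z).symm

variable [IsLocalRing R] [IsNoetherianRing R]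

theorem avoid {S : Set (Ideal R)} (hS : S.Finite) (hp : ∀ p ∈ S, p.IsPrime)
    (hm : ∀ p ∈ S, p ≠ maximalIdeal R) : ∃ x ∈ maximalIdeal R, ∀ p ∈ S, x ∉ p := by
  by_contra! h
  have := (Ideal.subset_union_prime_finite hS (f := id) (0 : Ideal R) 0
    (fun i hi _ _ => hp i hi) (I := maximalIdeal R)).1 (by
      intro x hx
      obtain ⟨p, hp, hxp⟩ := h x hx
      exact Set.mem_biUnion hp hxp)
  obtain ⟨p, hpS, hle⟩ := this
  exact hm p hpS ((maximalIdeal.isMaximal R).eq_of_le (hp p hpS).ne_top hle).symm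

theorem not_ass_of_Gam (h : Gam (maximalIdeal R) M = ⊥) : maximalIdeal R ∉ associatedPrimes R M := by
  intro hm
  rw [AssociatedPrimes.mem_iff, isAssociatedPrime_iff] at hm
  obtain ⟨hp, x, hx⟩ := hm
  have h1 : x ∈ Gam (maximalIdeal R) M := ⟨1, fun r hr => by
    rw [pow_one, hx] at hr; simpa [Submodule.mem_colon_singleton] using hr⟩
  rw [h, Submodule.mem_bot] at h1
  apply hp.ne_top
  rw [hx, h1]; ext; simp [Submodule.mem_colon_singleton]

theorem reg_of_avoid {x : R} (h : ∀ p ∈ associatedPrimes R M, x ∉ p) : IsSMulRegular M x := by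
  have := biUnion_associatedPrimes_eq_compl_regular R M
  by_contra hx
  have h1 : x ∈ ({r : R | IsSMulRegular M r})ᶜ := hx
  rw [← this] at h1
  obtain ⟨p, hp, hxp⟩ := Set.mem_iUnion₂.1 h1
  exact h p hp hxp

theorem exists_reg [Module.Finite R M] (h : Gam (maximalIdeal R) M = ⊥) :
    ∃ x ∈ maximalIdeal R, IsSMulRegular M x := by
  obtain ⟨x, hx, hx'⟩ := avoid (associatedPrimes.finite R M) (fun p hp => hp.isPrime)
    (fun p hp e => not_ass_of_Gam h (e ▸ hp))
  exact ⟨x, hx, reg_of_avoid hx'⟩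

theorem Gam_quot [Module.Finite R M] (J : Ideal R) : Gam J (M ⧸ Gam J M) = ⊥ := by
  rw [eq_bot_iff]
  rintro a ⟨n, hn⟩
  obtain ⟨a, rfl⟩ := Submodule.mkQ_surjective _ a
  obtain ⟨k, hk⟩ := JT.fg J (Gam_JT J (M := M))
  rw [Submodule.mem_bot, Submodule.mkQ_apply, Submodule.Quotient.mk_eq_zero]
  refine ⟨k + n, fun r hr => ?_⟩
  have : J ^ k * J ^ n ≤ LinearMap.ker (LinearMap.toSpanSingleton R M a) := by
    rw [Ideal.mul_le]
    intro s hs t ht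
    have h1 := hn t ht
    rw [← map_smul, Submodule.mkQ_apply, Submodule.Quotient.mk_eq_zero] at h1
    have h2 := congrArg Subtype.val (hk ⟨_, h1⟩ s hs)
    rw [LinearMap.mem_ker, LinearMap.toSpanSingleton_apply, mul_smul]
    exact h2
  rw [pow_add] at hr
  exact this hr

theorem LC_zero_of_quot {i : ℕ} {x : R} (hx : x ∈ maximalIdeal R) (hr : IsSMulRegular M x)
    (h : Subsingleton (LC (maximalIdeal R) i (QuotSMulTop x M))) :
    Subsingleton (LC (maximalIdeal R) (i+1) M) := by
  refine LC_inj_smul_zero _ hx fun z hz => ?_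
  refine LC_inj _ (qst_exact x) (lsmul_inj hr) (Submodule.mkQ_surjective _) i h ?_
  rw [LCmap_lsmul, hz, map_zero]

theorem LC_vanish (i : ℕ) : ∀ (M : Type u) [AddCommGroup M] [Module R M] [Module.Finite R M],
    Module.supportDim R M ≤ (i : WithBot ℕ∞) → Subsingleton (LC (maximalIdeal R) (i+1) M) := by
  induction i with
  | zero =>
    intro M _ _ _ h
    let J := maximalIdeal R
    have hb := LC_mkQ_bij J (Gam J M) (Gam_JT J) 0
    obtain ⟨x, hx, hr⟩ := exists_reg (Gam_quot (M := M) J)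
    have hd := Module.supportDim_quotSMulTop_succ_eq_supportDim hr hx
    have h2 := Module.supportDim_le_of_surjective _ (Submodule.mkQ_surjective (Gam J M))
    have h3 := wb_lem0 (hd.le.trans (h2.trans h))
    rw [Module.supportDim_eq_bot_iff_subsingleton] at h3
    have := LC_zero_of_quot (i := 0) hx hr (LC_sub_of_sub _ _)
    exact hb.1.subsingleton
  | succ i ih =>
    intro M _ _ _ h
    let J := maximalIdeal R
    have hb := LC_mkQ_bij J (Gam J M) (Gam_JT J) (i+1)
    obtain ⟨x, hx, hr⟩ := exists_reg (Gam_quot (M := M) J)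
    have hd := Module.supportDim_quotSMulTop_succ_eq_supportDim hr hx
    have h2 := Module.supportDim_le_of_surjective _ (Submodule.mkQ_surjective (Gam J M))
    have h3 := wb_lem (hd.le.trans (h2.trans h))
    have := LC_zero_of_quot hx hr (ih _ h3)
    exact hb.1.subsingleton

end Van


section Matlis
open Pointwise

variable {R : Type u} [CommRing R]
variable {M N P : Type u} [AddCommGroup M] [Module R M] [AddCommGroup N] [Module R N]
  [AddCommGroup P] [Module R P]
variable {E : Type u} [AddCommGroup E] [Module R E]

theorem ext_lem (hE : Module.Injective R E) (g : N →ₗ[R] P) (ψ : N →ₗ[R] E)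
    (h : LinearMap.ker g ≤ LinearMap.ker ψ) : ∃ χ : P →ₗ[R] E, χ ∘ₗ g = ψ := by
  let g' : (N ⧸ LinearMap.ker g) →ₗ[R] P := (LinearMap.ker g).liftQ g le_rfl
  have hg' : Injective g' := by
    rw [← LinearMap.ker_eq_bot]; exact Submodule.ker_liftQ_eq_bot _ _ _ le_rfl
  obtain ⟨χ, hχ⟩ := hE.out g' hg' ((LinearMap.ker g).liftQ ψ h)
  refine ⟨χ, LinearMap.ext fun a => ?_⟩
  have := hχ (Submodule.Quotient.mk a)
  simpa [g'] using this

/-- Matlis dual map -/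
abbrev dmap (E : Type u) [AddCommGroup E] [Module R E] (f : M →ₗ[R] N) :
    (N →ₗ[R] E) →ₗ[R] (M →ₗ[R] E) := LinearMap.lcomp R E f

theorem dmap_inj {f : M →ₗ[R] N} (hf : Surjective f) : Injective (dmap E f) := by
  intro a b h
  refine LinearMap.ext fun y => ?_
  obtain ⟨x, rfl⟩ := hf y
  exact LinearMap.congr_fun h x

theorem dmap_surj (hE : Module.Injective R E) {f : M →ₗ[R] N} (hf : Injective f) :
    Surjective (dmap E f) := by
  intro ψ
  obtain ⟨χ, hχ⟩ := ext_lem hE f ψ (by rw [LinearMap.ker_eq_bot.2 hf]; exact bot_le)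
  exact ⟨χ, hχ⟩

theorem dmap_exact (hE : Module.Injective R E) {f : M →ₗ[R] N} {g : N →ₗ[R] P}
    (h : Function.Exact f g) : Function.Exact (dmap E g) (dmap E f) := by
  intro ψ
  constructor
  · intro hψ
    obtain ⟨χ, hχ⟩ := ext_lem hE g ψ (by
      intro a ha
      obtain ⟨b, rfl⟩ := (h a).1 ha
      exact LinearMap.congr_fun hψ b)
    exact ⟨χ, hχ⟩
  · rintro ⟨χ, rfl⟩
    refine LinearMap.ext fun a => ?_
    show χ (g (f a)) = 0
    rw [(h (f a)).2 ⟨a, rfl⟩, map_zero]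

variable [IsLocalRing R]

theorem cogen (hE : IsResidueFieldInjHull R E) {n : N} (hn : n ≠ 0) :
    ∃ φ : N →ₗ[R] E, φ n ≠ 0 := by
  obtain ⟨hI, f, hf, -⟩ := hE
  obtain ⟨χ, hχ⟩ := ext_lem hI (LinearMap.toSpanSingleton R N n)
    (LinearMap.toSpanSingleton R E (f 1)) (by
      intro r hr
      rw [LinearMap.mem_ker, LinearMap.toSpanSingleton_apply] at hr ⊢
      have : r ∈ maximalIdeal R := by
        by_contra h
        have hu : IsUnit r := by simpa using h
        exact hn ((hu.smul_eq_zero).1 hr)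
      rw [← map_smul, Algebra.smul_def, ResidueField.algebraMap_eq, (residue_eq_zero_iff r).2 this]
      simp)
  refine ⟨χ, fun h => ?_⟩
  have := LinearMap.congr_fun hχ 1
  simp [h] at this
  exact one_ne_zero (hf (this.symm.trans (map_zero f).symm))

theorem socle (hE : IsResidueFieldInjHull R E) : ∃ S : Submodule R E, Module.Finite R S ∧
    ∀ e : E, (∀ r ∈ maximalIdeal R, r • e = 0) → e ∈ S := by
  obtain ⟨hI, f, hf, hess⟩ := hE
  refine ⟨LinearMap.range f, ?_, fun e he => ?_⟩
  · have : Module.Finite R (ResidueField R) := inferInstance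
    infer_instance
  by_cases h0 : e = 0
  · simp [h0]
  have h1 := hess (R ∙ e) (by simpa using h0)
  obtain ⟨y, hy, hy0⟩ := Submodule.exists_mem_ne_zero_of_ne_bot h1
  obtain ⟨hy1, hy2⟩ := hy
  obtain ⟨r, rfl⟩ := Submodule.mem_span_singleton.1 hy1
  have hu : IsUnit r := by
    by_contra h
    exact hy0 (he r h)
  obtain ⟨u, rfl⟩ := hu
  have := Submodule.smul_mem _ (↑u⁻¹ : R) hy2
  simpa [smul_smul] using this

variable [IsNoetherianRing R]

theorem dual_fin (hE : IsResidueFieldInjHull R E) (N : Type u) [AddCommGroup N] [Module R N]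
    [hN : Module.Finite R N] : JT (maximalIdeal R) N → Module.Finite R (N →ₗ[R] E) := by
  induction hN using IsNoetherianRing.induction_on_isQuotientEquivQuotientPrime R with
  | subsingleton N => intro _; infer_instance
  | quotient N p e =>
    intro h
    obtain ⟨n, hn⟩ := h (e.symm (Submodule.Quotient.mk 1))
    have hp : maximalIdeal R ≤ p.1 := by
      refine p.2.le_of_pow_le (n := n) fun r hr => ?_
      have := hn r hr
      rw [← map_smul, e.symm.map_eq_zero_iff, ← Submodule.Quotient.mk_smul,
        Submodule.Quotient.mk_eq_zero] at this
      simpa using this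
    obtain ⟨S, hS, hS'⟩ := socle hE
    let F : (N →ₗ[R] E) →ₗ[R] E := LinearMap.applyₗ (e.symm (Submodule.Quotient.mk 1))
    have hF : ∀ φ, F φ ∈ S := by
      intro φ
      apply hS'
      intro r hr
      show r • φ _ = 0
      rw [← map_smul, ← map_smul, ← Submodule.Quotient.mk_smul, (Submodule.Quotient.mk_eq_zero _).2, map_zero, map_zero]
      simpa using hp hr
    refine Module.Finite.of_injective (F.codRestrict S hF) ?_
    rw [LinearMap.injective_codRestrict_iff]
    intro a b hab
    refine LinearMap.ext fun y => ?_
    obtain ⟨y, rfl⟩ := e.symm.surjective y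
    obtain ⟨r, rfl⟩ := Submodule.Quotient.mk_surjective _ y
    have h1 : (Submodule.Quotient.mk r : R ⧸ p.1) = r • Submodule.Quotient.mk 1 := by
      rw [← Submodule.Quotient.mk_smul]; simp
    rw [h1, map_smul, map_smul, map_smul]
    exact congrArg (r • ·) hab
  | exact N₁ N₂ N₃ f g hf hg hfg h1 h3 =>
    intro h
    have i1 := h1 (JT.of_inj _ hf h)
    have i3 := h3 (JT.of_surj _ hg h)
    have : IsNoetherian R (N₁ →ₗ[R] E) := inferInstance
    have : IsNoetherian R (N₃ →ₗ[R] E) := inferInstance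
    have := isNoetherian_of_range_eq_ker (dmap E g) (dmap E f)
      (LinearMap.exact_iff.1 (dmap_exact hE.1 hfg)).symm
    infer_instance

theorem JT_dim (h : JT (maximalIdeal R) N) : Module.supportDim R N ≤ 0 := by
  have : Subsingleton (Module.support R N) := by
    have key : ∀ p ∈ Module.support R N, p.asIdeal = maximalIdeal R := by
      intro p hp
      obtain ⟨x, hx⟩ := Module.mem_support_iff_exists_annihilator.1 hp
      obtain ⟨n, hn⟩ := h x
      refine ((maximalIdeal.isMaximal R).eq_of_le p.2.ne_top ?_).symm
      refine p.2.le_of_pow_le (n := n) fun r hr => ?_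
      exact hx ((Submodule.mem_annihilator_span_singleton _ _).2 (hn r hr))
    refine ⟨fun a b => Subtype.ext (PrimeSpectrum.ext ?_)⟩
    rw [key _ a.2, key _ b.2]
  exact Order.krullDim_nonpos_of_subsingleton

theorem precomplete_pi [IsAdicComplete (maximalIdeal R) R] (n : ℕ) :
    IsPrecomplete (maximalIdeal R) (Fin n → R) := by
  rw [← AdicCompletion.of_surjective_iff]
  intro y
  choose r hr using fun j => AdicCompletion.of_surjective (maximalIdeal R) R
    (AdicCompletion.pi (maximalIdeal R) (fun _ : Fin n => R) y j)
  refine ⟨r, ?_⟩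
  apply (AdicCompletion.piEquivFin (maximalIdeal R) n).injective
  ext1 j
  rw [AdicCompletion.piEquivFin_apply, AdicCompletion.piEquivFin_apply, ← hr j]
  rfl

theorem fin_of_quot [IsAdicComplete (maximalIdeal R) R] [IsHausdorff (maximalIdeal R) N]
    {x : R} (hx : x ∈ maximalIdeal R) (h : Module.Finite R (QuotSMulTop x N)) :
    Module.Finite R N := by
  obtain ⟨n, s, hs⟩ := Module.Finite.exists_fin (R := R) (M := QuotSMulTop x N)
  choose t ht using fun i => Submodule.mkQ_surjective (x • (⊤ : Submodule R N)) (s i)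
  let f : (Fin n → R) →ₗ[R] N := Fintype.linearCombination R t
  have := precomplete_pi (R := R) n
  have hf : Surjective f := by
    apply surjective_of_mkQ_comp_surjective (I := maximalIdeal R)
    intro y
    obtain ⟨y, rfl⟩ := Submodule.mkQ_surjective _ y
    have hy : (x • (⊤ : Submodule R N)).mkQ y ∈ Submodule.span R (Set.range s) := by
      rw [hs]; trivial
    obtain ⟨c, hc⟩ := (Submodule.mem_span_range_iff_exists_fun R).1 hy
    refine ⟨c, ?_⟩
    have h1 : (x • (⊤ : Submodule R N)).mkQ (f c) = (x • (⊤ : Submodule R N)).mkQ y := by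
      rw [← hc]; simp only [f, Fintype.linearCombination_apply, map_sum, map_smul, ht]
    rw [← sub_eq_zero, ← map_sub, Submodule.mkQ_apply, Submodule.Quotient.mk_eq_zero, mem_smul_top_iff] at h1
    obtain ⟨b, hb⟩ := h1
    rw [LinearMap.comp_apply, ← sub_eq_zero, ← map_sub, Submodule.mkQ_apply, Submodule.Quotient.mk_eq_zero, ← hb]
    exact Submodule.smul_mem_smul hx trivial
  exact Module.Finite.of_surjective f hf

theorem dual_hausdorff (h : JT (maximalIdeal R) N) : IsHausdorff (maximalIdeal R) (N →ₗ[R] E) := by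
  refine ⟨fun φ hφ => LinearMap.ext fun z => ?_⟩
  obtain ⟨n, hn⟩ := h z
  have := hφ n
  rw [SModEq.zero] at this
  have key : (maximalIdeal R ^ n • ⊤ : Submodule R (N →ₗ[R] E)) ≤
      LinearMap.ker (LinearMap.applyₗ z : (N →ₗ[R] E) →ₗ[R] E) := by
    rw [Submodule.smul_le]
    intro r hr ψ _
    rw [LinearMap.mem_ker, map_smul]
    show r • ψ z = 0
    rw [← map_smul, hn r hr, map_zero]
  exact key this

/-- dual of local cohomology -/
abbrev TT (R : Type u) [CommRing R] [IsLocalRing R] (E : Type u) [AddCommGroup E] [Module R E] (i : ℕ) (M : Type u) [AddCommGroup M] [Module R M] : Type u :=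
  LC (maximalIdeal R) i M →ₗ[R] E

theorem TT_quot (hE : IsResidueFieldInjHull R E) (i : ℕ) {x : R} (hx : IsSMulRegular M x) :
    ∃ F : QuotSMulTop x (TT R E (i+1) M) →ₗ[R] TT R E i (QuotSMulTop x M), Injective F := by
  let δ := LCd (maximalIdeal R) (qst_exact x) (lsmul_inj hx) (Submodule.mkQ_surjective _) i
  have h1 := dmap_exact hE.1
    (LC_exact1 (maximalIdeal R) (qst_exact x) (lsmul_inj hx) (Submodule.mkQ_surjective _) i)
  have hk : LinearMap.ker (dmap E δ) = x • ⊤ := by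
    ext φ
    rw [mem_smul_top_iff]
    refine (h1 φ).trans ?_
    have : ∀ b : TT R E (i+1) M, dmap E (LCmap (maximalIdeal R) (i+1) (LinearMap.lsmul R M x)) b = x • b := by
      intro b
      refine LinearMap.ext fun z => ?_
      show b (LCmap _ _ _ z) = x • b z
      rw [LCmap_lsmul, map_smul]
    constructor
    · rintro ⟨b, rfl⟩; exact ⟨b, (this b).symm⟩
    · rintro ⟨b, rfl⟩; exact ⟨b, (this b)⟩
  refine ⟨Submodule.liftQ _ (dmap E δ) hk.ge, ?_⟩
  rw [← LinearMap.ker_eq_bot]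
  exact Submodule.ker_liftQ_eq_bot _ _ _ hk.le

/-- the dual of a bijective map -/
noncomputable def dequiv {f : M →ₗ[R] N} (hE : Module.Injective R E) (hf : Bijective f) : (N →ₗ[R] E) ≃ₗ[R] (M →ₗ[R] E) :=
  LinearEquiv.ofBijective (dmap E f) ⟨dmap_inj hf.2, dmap_surj hE hf.1⟩

theorem TT_fin [IsAdicComplete (maximalIdeal R) R] (hE : IsResidueFieldInjHull R E) (i : ℕ) :
    ∀ (M : Type u) [AddCommGroup M] [Module R M] [Module.Finite R M],
    Module.Finite R (TT R E i M) ∧ Module.supportDim R (TT R E i M) ≤ (i : WithBot ℕ∞) := by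
  induction i with
  | zero =>
    intro M _ _ _
    have hf : Module.Finite R (LC (maximalIdeal R) 0 M) :=
      Module.Finite.of_injective (LCev M (maximalIdeal R)) (LCev_inj _)
    have ht : JT (maximalIdeal R) (LC (maximalIdeal R) 0 M) := LC_torsion _ _
    refine ⟨dual_fin hE _ ht, ?_⟩
    obtain ⟨n, hn⟩ := JT.fg _ ht
    exact JT_dim fun φ => ⟨n, fun r hr => LinearMap.ext fun z => by
      rw [LinearMap.smul_apply, ← map_smul, hn z r hr, map_zero, LinearMap.zero_apply]⟩
  | succ i ih =>
    intro M _ _ _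
    let J := maximalIdeal R
    have hb := LC_mkQ_bij J (Gam J M) (Gam_JT J) i
    obtain ⟨x, hx, hr⟩ := exists_reg (Gam_quot (M := M) J)
    obtain ⟨F, hF⟩ := TT_quot (E := E) hE i hr
    obtain ⟨i1, i2⟩ := ih (QuotSMulTop x (M ⧸ Gam J M))
    have j1 := Module.Finite.of_injective F hF
    have j2 := (Module.supportDim_le_of_injective F hF).trans i2
    have := dual_hausdorff (E := E) (LC_torsion J (i+1) (M := M ⧸ Gam J M))
    have k1 := fin_of_quot hx j1
    have k2 : Module.supportDim R (TT R E (i+1) (M ⧸ Gam J M)) ≤ ((i+1 : ℕ) : WithBot ℕ∞) := by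
      refine (Module.supportDim_le_supportDim_quotSMulTop_succ hx).trans ?_
      rw [Nat.cast_add]
      exact add_le_add j2 le_rfl
    let e := dequiv hE.1 hb
    exact ⟨Module.Finite.equiv e, (Module.supportDim_eq_of_equiv e).symm.le.trans k2⟩

end Matlis


section Nonvan
open Pointwise

variable {R : Type u} [CommRing R]
variable {M N P : Type u} [AddCommGroup M] [Module R M] [AddCommGroup N] [Module R N]
  [AddCommGroup P] [Module R P]
variable {E : Type u} [AddCommGroup E] [Module R E]

theorem exists_prime_dim {i : ℕ} (h : (i : WithBot ℕ∞) ≤ Module.supportDim R N) :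
    ∃ q ∈ Module.support R N, (i : WithBot ℕ∞) ≤ ringKrullDim (R ⧸ q.asIdeal) := by
  obtain ⟨l, hl⟩ := Order.le_krullDim_iff.1 h
  refine ⟨l.head.1, l.head.2, ?_⟩
  rw [ringKrullDim_quotient]
  refine Order.le_krullDim_iff.2 ⟨⟨l.length, fun j => ⟨(l j).1, ?_⟩, fun j => ?_⟩, hl⟩
  · have : l.head ≤ l j := l.strictMono.monotone (Fin.zero_le _)
    exact this
  · exact l.step j

variable [IsLocalRing R] 

theorem reg_dual {y : R} (hr : ∀ z : N, ∃ w : N, (y : R) • w = z) : IsSMulRegular (N →ₗ[R] E) y := by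
  intro a b hab
  refine LinearMap.ext fun z => ?_
  obtain ⟨w, rfl⟩ := hr z
  rw [map_smul, map_smul]
  exact LinearMap.congr_fun hab w

theorem Gam_bot_of_reg {x : R} (hx : x ∈ maximalIdeal R) (hr : IsSMulRegular N x) :
    Gam (maximalIdeal R) N = ⊥ := by
  rw [eq_bot_iff]
  rintro a ⟨n, hn⟩
  rw [Submodule.mem_bot]
  apply hr.pow n
  show x ^ n • a = x ^ n • (0 : N)
  rw [hn _ (Ideal.pow_mem_pow hx n), smul_zero]

theorem prime_eq_max {q : Ideal R} [hq : q.IsPrime] (h : ringKrullDim (R ⧸ q) = 0) :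
    q = maximalIdeal R := by
  have : Ring.KrullDimLE 0 (R ⧸ q) := ringKrullDimZero_iff_ringKrullDim_eq_zero.2 h
  exact eq_maximalIdeal (Ideal.Quotient.maximal_of_isField _ Ring.KrullDimLE.isField_of_isDomain)

theorem reg_quot {q : Ideal R} [hq : q.IsPrime] {y : R} (hy : y ∉ q) : IsSMulRegular (R ⧸ q) y := by
  intro a b hab
  have hy' : (Ideal.Quotient.mk q y) ≠ 0 := by rwa [ne_eq, Ideal.Quotient.eq_zero_iff_mem]
  apply mul_left_cancel₀ hy'
  have : ∀ c : R ⧸ q, y • c = Ideal.Quotient.mk q y * c := fun c => Algebra.smul_def _ _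
  simpa [this] using hab

variable [IsNoetherianRing R]

theorem LC_smul_surj [Module.Finite R N] {j : ℕ} (hN : Module.supportDim R N ≤ ((j+1 : ℕ) : WithBot ℕ∞))
    {y : R} (hy : y ∈ maximalIdeal R) (hr : IsSMulRegular N y) (z : LC (maximalIdeal R) (j+1) N) :
    ∃ w, y • w = z := by
  have hd := Module.supportDim_quotSMulTop_succ_eq_supportDim hr hy
  have h3 := wb_lem (hd.le.trans hN)
  obtain ⟨w, hw⟩ := LC_surj' _ (qst_exact y) (lsmul_inj hr) (Submodule.mkQ_surjective _) (j+1)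
    (LC_vanish j _ h3) z
  exact ⟨w, by rw [← hw, LCmap_lsmul]⟩

theorem TT_reg [Module.Finite R N] {j : ℕ} (hN : Module.supportDim R N ≤ ((j+1 : ℕ) : WithBot ℕ∞))
    {y : R} (hy : y ∈ maximalIdeal R) (hr : IsSMulRegular N y) : IsSMulRegular (TT R E (j+1) N) y :=
  reg_dual (LC_smul_surj hN hy hr)

theorem TT_exists_reg (hE : IsResidueFieldInjHull R E) [Module.Finite R N] {j : ℕ}
    (hN : Module.supportDim R N ≤ ((j+1 : ℕ) : WithBot ℕ∞)) :
    ∃ y ∈ maximalIdeal R, IsSMulRegular (TT R E (j+1) N) y := by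
  let J := maximalIdeal R
  have hb := LC_mkQ_bij J (Gam J N) (Gam_JT J) j
  obtain ⟨y, hy, hr⟩ := exists_reg (Gam_quot (M := N) J)
  have h2 := Module.supportDim_le_of_surjective _ (Submodule.mkQ_surjective (Gam J N))
  refine ⟨y, hy, ?_⟩
  exact ((dequiv hE.1 hb).isSMulRegular_congr y).1 (TT_reg (h2.trans hN) hy hr)

theorem ann_dual {q : Ideal R} [hq : q.IsPrime] {i : ℕ} (h : ringKrullDim (R ⧸ q) = (i : WithBot ℕ∞))
    {z : TT R E i (R ⧸ q)} (hz : z ≠ 0) (r : R) : r • z = 0 ↔ r ∈ q := by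
  constructor
  · intro hrz
    by_contra hr
    by_cases hu : IsUnit r
    · exact hz (hu.smul_eq_zero.1 hrz)
    have hm : r ∈ maximalIdeal R := hu
    cases i with
    | zero => exact hr ((prime_eq_max h).symm ▸ hm)
    | succ j =>
      have := TT_reg (E := E) (N := R ⧸ q)
        ((Module.supportDim_quotient_eq_ringKrullDim q).le.trans h.le) hm (reg_quot hr)
      exact hz (this (by simpa using hrz))
  · intro hr
    refine LinearMap.ext fun w => ?_
    have : LinearMap.lsmul R (R ⧸ q) r = 0 := by
      ext
      simp only [LinearMap.comp_apply, LinearMap.lsmul_apply, LinearMap.zero_apply]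
      rw [← map_smul, Submodule.mkQ_apply, Submodule.Quotient.mk_eq_zero]
      simpa using hr
    have h2 := LCmap_lsmul (maximalIdeal R) i r w
    rw [this, LCmap_zero] at h2
    rw [LinearMap.smul_apply, ← map_smul, ← h2]
    simp

theorem LC_surj_of_dim {g : M →ₗ[R] N} (hg : Surjective g) [Module.Finite R M] {i : ℕ}
    (hM : Module.supportDim R M ≤ (i : WithBot ℕ∞)) : Surjective (LCmap (maximalIdeal R) i g) := by
  have he : Function.Exact (LinearMap.ker g).subtype g := LinearMap.exact_subtype_ker_map g
  refine LC_surj _ he (LinearMap.ker g).injective_subtype hg i (LC_vanish i _ ?_)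
  exact (Module.supportDim_le_of_injective _ (LinearMap.ker g).injective_subtype).trans hM

theorem LC_nonvan [IsAdicComplete (maximalIdeal R) R] (hE : IsResidueFieldInjHull R E) (i : ℕ) :
    ∀ (p : Ideal R) [p.IsPrime], ringKrullDim (R ⧸ p) = (i : WithBot ℕ∞) →
      Nontrivial (LC (maximalIdeal R) i (R ⧸ p)) := by
  induction i with
  | zero =>
    intro p _ h
    have hp := prime_eq_max h
    obtain ⟨z, hz⟩ := (LCev_range (M := R ⧸ p) (maximalIdeal R) (Submodule.Quotient.mk 1)).2 ⟨1, fun r hr => by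
      rw [← Submodule.Quotient.mk_smul, Submodule.Quotient.mk_eq_zero, hp]
      simpa using hr⟩
    refine ⟨z, 0, ?_⟩
    rintro rfl
    rw [map_zero] at hz
    have := (Submodule.Quotient.mk_eq_zero _).1 hz.symm
    exact (inferInstance : p.IsPrime).ne_top ((Ideal.eq_top_iff_one _).2 this)
  | succ i ih =>
    intro p hp h
    by_contra hc
    rw [not_nontrivial_iff_subsingleton] at hc
    obtain ⟨hf, -⟩ := TT_fin (E := E) hE i (R ⧸ p)
    have hpm : p ≠ maximalIdeal R := by
      rintro rfl
      let := Ideal.Quotient.field (maximalIdeal R)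
      rw [ringKrullDim_eq_zero_of_field] at h
      exact absurd h (by norm_cast)
    obtain ⟨x, hx, hxS⟩ := avoid (R := R)
      (S := {p} ∪ (associatedPrimes R (TT R E i (R ⧸ p)) \ {maximalIdeal R}))
      ((Set.finite_singleton p).union ((associatedPrimes.finite R _).subset Set.diff_subset))
      (by
        rintro q (rfl | ⟨hq, -⟩)
        · exact hp
        · exact hq.isPrime)
      (by
        rintro q (rfl | ⟨-, hq⟩)
        · exact hpm
        · exact hq)
    have hxp : x ∉ p := hxS p (Or.inl rfl)
    have hr := reg_quot hxp
    have hd := Module.supportDim_quotSMulTop_succ_eq_supportDim hr hx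
    rw [Module.supportDim_quotient_eq_ringKrullDim, h] at hd
    have hd1 := wb_lem hd.le
    have hd2 : (i : WithBot ℕ∞) ≤ Module.supportDim R (QuotSMulTop x (R ⧸ p)) := by
      revert hd
      generalize Module.supportDim R (QuotSMulTop x (R ⧸ p)) = a
      intro hd
      induction a with
      | bot => simp at hd; exact absurd hd.symm (by norm_cast)
      | coe a =>
        have h' : ((a + 1 : ℕ∞) : WithBot ℕ∞) = (((i + 1 : ℕ) : ℕ∞) : WithBot ℕ∞) := hd
        rw [WithBot.coe_inj] at h'
        change ((i : ℕ∞) : WithBot ℕ∞) ≤ (a : WithBot ℕ∞)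
        rw [WithBot.coe_le_coe]
        rw [Nat.cast_add, Nat.cast_one] at h'
        exact (ENat.add_le_add_iff_right ENat.one_ne_top).1 h'.ge
    obtain ⟨⟨q, hqp⟩, hqs, hqd⟩ := exists_prime_dim hd2
    have hann := Module.annihilator_le_of_mem_support hqs
    have hxq : x ∈ q := hann (by
      rw [Module.mem_annihilator]
      intro a
      obtain ⟨a, rfl⟩ := Submodule.mkQ_surjective _ a
      rw [← map_smul, Submodule.mkQ_apply, Submodule.Quotient.mk_eq_zero, mem_smul_top_iff]
      exact ⟨a, rfl⟩)
    have hpq : p ≤ q := fun r hr => hann (by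
      rw [Module.mem_annihilator]
      intro a
      obtain ⟨a, rfl⟩ := Submodule.mkQ_surjective _ a
      obtain ⟨a, rfl⟩ := Submodule.mkQ_surjective _ a
      rw [← map_smul, ← map_smul, Submodule.mkQ_apply p, (Submodule.Quotient.mk_eq_zero _).2, map_zero]
      exact p.mul_mem_right _ hr)
    let g1 : (R ⧸ p) →ₗ[R] (R ⧸ q) := Submodule.factor hpq
    have hg1 : Surjective g1 := Submodule.factor_surjective hpq
    let g : QuotSMulTop x (R ⧸ p) →ₗ[R] (R ⧸ q) := Submodule.liftQ _ g1 (by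
      intro a ha
      obtain ⟨b, rfl⟩ := (mem_smul_top_iff _ _).1 ha
      obtain ⟨b, rfl⟩ := Submodule.mkQ_surjective _ b
      rw [LinearMap.mem_ker, ← map_smul]
      show Submodule.factor hpq (Submodule.mkQ _ _) = 0
      rw [Submodule.factor_mk, Submodule.mkQ_apply, Submodule.Quotient.mk_eq_zero]
      exact q.mul_mem_right _ hxq)
    have hg : Surjective g := by
      intro a
      obtain ⟨b, rfl⟩ := hg1 a
      exact ⟨Submodule.Quotient.mk b, by simp [g]⟩
    have hqd' : ringKrullDim (R ⧸ q) = (i : WithBot ℕ∞) := by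
      refine le_antisymm ?_ hqd
      rw [← Module.supportDim_quotient_eq_ringKrullDim]
      exact (Module.supportDim_le_of_surjective _ hg).trans hd1
    have s1 := LC_surj (maximalIdeal R) (qst_exact x) (lsmul_inj hr) (Submodule.mkQ_surjective _) i hc
    have s2 := LC_surj_of_dim hg hd1
    have hnt := ih q hqd'
    obtain ⟨w, hw⟩ := exists_ne (0 : LC (maximalIdeal R) i (R ⧸ q))
    obtain ⟨z, hz⟩ := cogen hE hw
    have hz0 : z ≠ 0 := by rintro rfl; simp at hz
    let ι := dmap E (LCmap (maximalIdeal R) i (x • (⊤ : Submodule R (R ⧸ p))).mkQ) ∘ₗ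
      dmap E (LCmap (maximalIdeal R) i g)
    have hι : Injective ι := (dmap_inj s1).comp (dmap_inj s2)
    have hass : q ∈ associatedPrimes R (TT R E i (R ⧸ p)) := by
      rw [AssociatedPrimes.mem_iff, isAssociatedPrime_iff]
      refine ⟨hqp, ι z, ?_⟩
      ext r
      rw [Submodule.mem_colon_singleton, Submodule.mem_bot, ← map_smul, map_eq_zero_iff ι hι, ann_dual hqd' hz0]
    have hqm : q = maximalIdeal R := by
      by_contra hne
      exact hxS q (Or.inr ⟨hass, hne⟩) hxq
    have hi : i = 0 := by
      subst hqm
      let := Ideal.Quotient.field (maximalIdeal R)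
      rw [ringKrullDim_eq_zero_of_field] at hqd'
      exact_mod_cast hqd'.symm
    subst hi
    have := LC0_zero _ (Gam_bot_of_reg hx hr)
    exact hz0 (hι (Subsingleton.elim _ _))

theorem no_ass [IsAdicComplete (maximalIdeal R) R] (hE : IsResidueFieldInjHull R E) {d : ℕ}
    (hd : ringKrullDim R = ((d+1 : ℕ) : WithBot ℕ∞)) {a : R}
    (ha : ∀ w : LC (maximalIdeal R) (d+1) R, a • w = 0) {p : Ideal R} [p.IsPrime]
    (hp : ∀ r, r * a = 0 ↔ r ∈ p) (hpd : ringKrullDim (R ⧸ p) = ((d+1 : ℕ) : WithBot ℕ∞)) : False := by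
  have hker : LinearMap.ker (LinearMap.toSpanSingleton R R a) = p := by
    ext r; simp [hp]
  let f : (R ⧸ p) →ₗ[R] R := Submodule.liftQ p (LinearMap.toSpanSingleton R R a) hker.ge
  have hf : Injective f := by
    rw [← LinearMap.ker_eq_bot]
    exact Submodule.ker_liftQ_eq_bot _ _ _ hker.le
  have he : Function.Exact f (LinearMap.range f).mkQ := LinearMap.exact_map_mkQ_range f
  have hRd : Module.supportDim R R ≤ ((d+1 : ℕ) : WithBot ℕ∞) := by
    rw [Module.supportDim_self_eq_ringKrullDim, hd]
  have s1 : Surjective (LCmap (maximalIdeal R) (d+1) (p.mkQ : R →ₗ[R] R ⧸ p)) :=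
    LC_surj_of_dim (Submodule.mkQ_surjective _) hRd
  have hcomp : f ∘ₗ p.mkQ = LinearMap.lsmul R R a := by
    ext; simp [f]
  have s2 : Surjective (LCd (maximalIdeal R) he hf (Submodule.mkQ_surjective _) d) := by
    intro w
    refine (LC_exact1 (maximalIdeal R) he hf (Submodule.mkQ_surjective _) d w).1 ?_
    obtain ⟨v, rfl⟩ := s1 w
    rw [← LCmap_comp, hcomp, LCmap_lsmul, ha]
  have hι := dmap_inj (E := E) s2
  have hnt := LC_nonvan hE (d+1) p hpd
  obtain ⟨w, hw⟩ := exists_ne (0 : LC (maximalIdeal R) (d+1) (R ⧸ p))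
  obtain ⟨z, hz⟩ := cogen hE hw
  have hz0 : z ≠ 0 := by rintro rfl; simp at hz
  have hk2 : LinearMap.ker (LinearMap.toSpanSingleton R (TT R E (d+1) (R ⧸ p)) z) = p := by
    ext r
    rw [LinearMap.mem_ker, LinearMap.toSpanSingleton_apply, ann_dual hpd hz0]
  let j : (R ⧸ p) →ₗ[R] TT R E (d+1) (R ⧸ p) := Submodule.liftQ p (LinearMap.toSpanSingleton R _ z) hk2.ge
  have hj : Injective j := by
    rw [← LinearMap.ker_eq_bot]
    exact Submodule.ker_liftQ_eq_bot _ _ _ hk2.le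
  have h1 := Module.supportDim_le_of_injective (dmap E (LCd (maximalIdeal R) he hf (Submodule.mkQ_surjective _) d) ∘ₗ j) (hι.comp hj)
  have h2 := h1.trans (TT_fin (E := E) hE d (R ⧸ LinearMap.range f)).2
  rw [Module.supportDim_quotient_eq_ringKrullDim, hpd] at h2
  have : d + 1 ≤ d := by exact_mod_cast h2
  omega

end Nonvan


section Final
open Pointwise

variable {R : Type u} [CommRing R] [IsLocalRing R]
variable {M N P : Type u} [AddCommGroup M] [Module R M] [AddCommGroup N] [Module R N]
  [AddCommGroup P] [Module R P]
variable {E : Type u} [AddCommGroup E] [Module R E]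

theorem mlen_lt_iff : mlen R N < ⊤ ↔ Module.length R N ≠ ⊤ := by
  unfold mlen
  rw [← Module.coe_length, lt_top_iff_ne_top, ne_eq, ne_eq, not_iff_not]
  exact WithBot.coe_inj

variable [IsNoetherianRing R]

theorem JT_len (N : Type u) [AddCommGroup N] [Module R N]
    [hN : Module.Finite R N] : JT (maximalIdeal R) N → Module.length R N ≠ ⊤ := by
  induction hN using IsNoetherianRing.induction_on_isQuotientEquivQuotientPrime R with
  | subsingleton N => intro _; rw [Module.length_eq_zero]; simp
  | quotient N p e =>
    intro h
    obtain ⟨n, hn⟩ := h (e.symm (Submodule.Quotient.mk 1))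
    have hp : maximalIdeal R ≤ p.1 := by
      refine p.2.le_of_pow_le (n := n) fun r hr => ?_
      have := hn r hr
      rw [← map_smul, e.symm.map_eq_zero_iff, ← Submodule.Quotient.mk_smul,
        Submodule.Quotient.mk_eq_zero] at this
      simpa using this
    have hp' := (maximalIdeal.isMaximal R).eq_of_le p.2.ne_top hp
    have : IsSimpleModule R (R ⧸ p.1) := by
      rw [isSimpleModule_iff_isCoatom, ← hp']
      exact (maximalIdeal.isMaximal R).out
    rw [e.length_eq, Module.length_eq_one]
    simp
  | exact N₁ N₂ N₃ f g hf hg hfg h1 h3 =>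
    intro h
    have i1 := h1 (JT.of_inj _ hf h)
    have i3 := h3 (JT.of_surj _ hg h)
    rw [Module.length_eq_add_of_exact f g hf hg hfg]
    simp [i1, i3]

theorem JT_of_ass [Module.Finite R N] (h : ∀ p ∈ associatedPrimes R N, p = maximalIdeal R) :
    JT (maximalIdeal R) N := by
  have hrad : maximalIdeal R ≤ (Module.annihilator R N).radical := by
    rw [← Ideal.sInf_minimalPrimes]
    refine le_sInf fun p hp => ?_
    exact (h p (Module.associatedPrimes.minimalPrimes_annihilator_subset_associatedPrimes R N hp)).ge
  obtain ⟨n, hn⟩ := Ideal.exists_pow_le_of_le_radical_of_fg hrad (IsNoetherian.noetherian _)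
  exact fun x => ⟨n, fun r hr => Module.mem_annihilator.1 (hn hr) x⟩

theorem ker_JT [IsAdicComplete (maximalIdeal R) R] (hE : IsResidueFieldInjHull R E) {d : ℕ}
    (hd : ringKrullDim R = ((d+1 : ℕ) : WithBot ℕ∞))
    (hass : ∀ p ∈ associatedPrimes R R,
      ringKrullDim (R ⧸ p) = ringKrullDim R ∨ p = maximalIdeal R)
    {K : Type u} [AddCommGroup K] [Module R K] (e : K ≃ₗ[R] TT R E (d+1) R) :
    JT (maximalIdeal R) (LinearMap.ker (LinearMap.lsmul R K)) := by
  apply JT_of_ass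
  intro p hp
  have hpR := associatedPrimes.subset_of_injective (LinearMap.ker (LinearMap.lsmul R K)).injective_subtype hp
  refine (hass p hpR).resolve_left fun hpd => ?_
  rw [AssociatedPrimes.mem_iff, isAssociatedPrime_iff] at hp
  obtain ⟨hpp, ⟨a, ha⟩, hpa⟩ := hp
  refine no_ass hE hd (a := a) ?_ (p := p) ?_ (hpd.trans hd)
  · intro w
    by_contra hw
    obtain ⟨φ, hφ⟩ := cogen hE hw
    rw [map_smul, ← LinearMap.smul_apply] at hφ
    obtain ⟨k, rfl⟩ := e.surjective φ
    rw [← map_smul] at hφ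
    have : a • k = 0 := LinearMap.congr_fun ha k
    rw [this] at hφ
    simp at hφ
  · intro r
    rw [hpa, Submodule.mem_colon_singleton, Submodule.mem_bot, Subtype.ext_iff]
    rfl

theorem depth_two (hE : IsResidueFieldInjHull R E) {d : ℕ}
    (hd : ringKrullDim R = ((d+2 : ℕ) : WithBot ℕ∞))
    {K : Type u} [AddCommGroup K] [Module R K] (e : K ≃ₗ[R] TT R E (d+2) R) :
    Subsingleton (LC (maximalIdeal R) 0 (K →ₗ[R] K)) ∧
    Subsingleton (LC (maximalIdeal R) 1 (K →ₗ[R] K)) := by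
  let J := maximalIdeal R
  have hb := LC_mkQ_bij J (Gam J R) (Gam_JT J) (d+1)
  obtain ⟨x, hx, hr⟩ := exists_reg (Gam_quot (M := R) J)
  have h2 : Module.supportDim R (R ⧸ Gam J R) ≤ ((d+2 : ℕ) : WithBot ℕ∞) := by
    refine (Module.supportDim_le_of_surjective _ (Submodule.mkQ_surjective (Gam J R))).trans ?_
    rw [Module.supportDim_self_eq_ringKrullDim, hd]
  let e' : K ≃ₗ[R] TT R E (d+2) (R ⧸ Gam J R) := e.trans (dequiv hE.1 hb).symm
  have xK : IsSMulRegular K x := (e'.isSMulRegular_congr x).2 (TT_reg h2 hx hr)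
  obtain ⟨F, hF⟩ := TT_quot (E := E) hE (d+1) hr
  have h3 := Module.supportDim_quotSMulTop_succ_eq_supportDim hr hx
  obtain ⟨y, hy, hyr⟩ := TT_exists_reg (E := E) hE (j := d) (wb_lem (h3.le.trans h2))
  have yK : IsSMulRegular (QuotSMulTop x K) y := by
    have h4 : IsSMulRegular (QuotSMulTop x (TT R E (d+2) (R ⧸ Gam J R))) y := by
      intro a b hab
      apply hF; apply hyr
      show y • F a = y • F b
      rw [← map_smul, ← map_smul]; exact congrArg F hab
    intro a b hab
    obtain ⟨a, rfl⟩ := Submodule.mkQ_surjective _ a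
    obtain ⟨b, rfl⟩ := Submodule.mkQ_surjective _ b
    have h5 : (x • (⊤ : Submodule R K)).mkQ (y • (a - b)) = 0 := by
      rw [map_smul, map_sub, smul_sub, sub_eq_zero]; exact hab
    rw [Submodule.mkQ_apply, Submodule.Quotient.mk_eq_zero, mem_smul_top_iff] at h5
    obtain ⟨c, hc⟩ := h5
    have h6 : (x • (⊤ : Submodule R (TT R E (d+2) (R ⧸ Gam J R)))).mkQ (e' (a - b)) = 0 := by
      apply h4
      show y • _ = y • (0 : QuotSMulTop x (TT R E (d+2) (R ⧸ Gam J R)))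
      rw [smul_zero, ← map_smul, ← map_smul, ← hc, Submodule.mkQ_apply, Submodule.Quotient.mk_eq_zero, mem_smul_top_iff]
      exact ⟨e' c, by rw [map_smul]⟩
    rw [Submodule.mkQ_apply, Submodule.Quotient.mk_eq_zero, mem_smul_top_iff] at h6
    obtain ⟨c', hc'⟩ := h6
    rw [← sub_eq_zero, ← map_sub, Submodule.mkQ_apply, Submodule.Quotient.mk_eq_zero, mem_smul_top_iff]
    refine ⟨e'.symm c', ?_⟩
    rw [← map_smul, hc', e'.symm_apply_apply]
  have xS : IsSMulRegular (K →ₗ[R] K) x := fun a b hab =>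
    LinearMap.ext fun k => xK (LinearMap.congr_fun hab k)
  have yS : IsSMulRegular (QuotSMulTop x (K →ₗ[R] K)) y := by
    intro a b hab
    obtain ⟨a, rfl⟩ := Submodule.mkQ_surjective _ a
    obtain ⟨b, rfl⟩ := Submodule.mkQ_surjective _ b
    have h5 : (x • (⊤ : Submodule R (K →ₗ[R] K))).mkQ (y • (a - b)) = 0 := by
      rw [map_smul, map_sub, smul_sub, sub_eq_zero]; exact hab
    rw [Submodule.mkQ_apply, Submodule.Quotient.mk_eq_zero, mem_smul_top_iff] at h5
    obtain ⟨c, hc⟩ := h5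
    have h6 : ∀ k, ∃ l, x • l = (a - b) k := by
      intro k
      rw [← mem_smul_top_iff, ← Submodule.Quotient.mk_eq_zero, ← Submodule.mkQ_apply]
      apply yK
      show y • _ = y • (0 : QuotSMulTop x K)
      rw [smul_zero, ← map_smul, ← LinearMap.smul_apply, ← hc, Submodule.mkQ_apply, Submodule.Quotient.mk_eq_zero, mem_smul_top_iff]
      exact ⟨c k, rfl⟩
    choose l hl using h6
    rw [← sub_eq_zero, ← map_sub, Submodule.mkQ_apply, Submodule.Quotient.mk_eq_zero, mem_smul_top_iff]
    refine ⟨⟨⟨l, fun u v => xK ?_⟩, fun r u => xK ?_⟩, LinearMap.ext hl⟩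
    · show x • _ = x • (_ + _)
      rw [smul_add, hl, hl, hl, map_add]
    · show x • _ = x • (r • _)
      rw [smul_comm, hl, hl, map_smul]
  exact ⟨LC0_zero _ (Gam_bot_of_reg hx xS),
    LC_zero_of_quot hx xS (LC0_zero _ (Gam_bot_of_reg hy yS))⟩

theorem mem_H0 (a : N) : a ∈ H0 R N ↔ ∃ n, ∀ r ∈ maximalIdeal R ^ n, r • a = 0 := by
  unfold H0
  rw [Submodule.mem_iSup_of_directed]
  · simp [Submodule.mem_torsionBySet_iff]
  · refine directed_of_isDirected_le fun i j hij a ha => ?_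
    rw [Submodule.mem_torsionBySet_iff] at ha ⊢
    exact fun r => ha ⟨r.1, Ideal.pow_le_pow_right hij r.2⟩

theorem main_aux [IsAdicComplete (maximalIdeal R) R] {d : ℕ} (hd2 : 2 ≤ d)
    (hd : ringKrullDim R = ((d : ℕ∞) : WithBot ℕ∞))
    (K : Type u) [AddCommGroup K] [Module R K] (hK : IsCanonicalModule R d K)
    (hass : ∀ p ∈ associatedPrimes R R,
      ringKrullDim (R ⧸ p) = ringKrullDim R ∨ p = maximalIdeal R) :
    mlen R (LinearMap.ker (LinearMap.lsmul R K)) < ⊤ ∧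
    Nonempty ((lcoh R 1 R) ≃ₗ[R]
      H0 R ((K →ₗ[R] K) ⧸ LinearMap.range (LinearMap.lsmul R K))) ∧
    mlen R (lcoh R 1 R) < ⊤ := by
  obtain ⟨d, rfl⟩ : ∃ d', d = d' + 2 := ⟨d - 2, by omega⟩
  obtain ⟨hfin, E, _, _, hE, ⟨e0⟩⟩ := hK
  let J := maximalIdeal R
  have e1 : LC J (d+2) R ≃ₗ[R] lcoh R (d+2) R := lcohEquiv J (d+1) R
  let e : K ≃ₗ[R] TT R E (d+2) R := e0.trans (dequiv hE.1 (f := e1.toLinearMap) e1.bijective)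
  have hU := ker_JT hE hd hass e
  obtain ⟨hS0, hS1⟩ := depth_two hE hd e
  let φ : R →ₗ[R] (K →ₗ[R] K) := LinearMap.lsmul R K
  have b1 := LC_mkQ_bij J (LinearMap.ker φ) hU 0
  let C := (K →ₗ[R] K) ⧸ LinearMap.range φ
  let f : (R ⧸ LinearMap.ker φ) →ₗ[R] (K →ₗ[R] K) := Submodule.liftQ _ φ le_rfl
  have hf : Injective f := by
    rw [← LinearMap.ker_eq_bot]
    exact Submodule.ker_liftQ_eq_bot _ _ _ le_rfl
  have he : Function.Exact f (LinearMap.range φ).mkQ := by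
    have : LinearMap.range φ = LinearMap.range f := (Submodule.range_liftQ _ _ _).symm
    rw [this]
    exact LinearMap.exact_map_mkQ_range f
  let δ := LCd J he hf (Submodule.mkQ_surjective _) 0
  have hδ : Bijective δ := ⟨LCd_inj J he hf (Submodule.mkQ_surjective _) 0 hS0,
    LCd_surj J he hf (Submodule.mkQ_surjective _) 0 hS1⟩
  let ev : LC J 0 C →ₗ[R] H0 R C := (LCev C J).codRestrict _
    (fun z => (mem_H0 _).2 ((LCev_range J _).1 ⟨z, rfl⟩))
  have hev : Bijective ev := by
    refine ⟨?_, ?_⟩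
    · rw [LinearMap.injective_codRestrict_iff]
      exact LCev_inj J
    · rintro ⟨a, ha⟩
      obtain ⟨z, hz⟩ := (LCev_range J a).2 ((mem_H0 _).1 ha)
      exact ⟨z, Subtype.ext hz⟩
  have e2 : LC J 1 R ≃ₗ[R] lcoh R 1 R := lcohEquiv J 0 R
  let e3 : lcoh R 1 R ≃ₗ[R] H0 R C :=
    ((e2.symm.trans (LinearEquiv.ofBijective _ b1)).trans (LinearEquiv.ofBijective δ hδ).symm).trans
      (LinearEquiv.ofBijective ev hev)
  have hH : Module.length R (H0 R C) ≠ ⊤ := by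
    refine JT_len _ ?_
    rintro ⟨a, ha⟩
    obtain ⟨n, hn⟩ := (mem_H0 _).1 ha
    exact ⟨n, fun r hr => Subtype.ext (hn r hr)⟩
  refine ⟨mlen_lt_iff.2 (JT_len _ hU), ⟨e3⟩, mlen_lt_iff.2 ?_⟩
  rwa [e3.length_eq]

end Final

/-- **Goto–Nakamura.** Let `R` be a complete local ring of dimension `d ≥ 2` with canonical
module `K`, `S = Hom_R(K,K)` and `φ : R → S` the natural map. If
`Ass R ⊆ Assh R ∪ {m}`, then `ker φ` has finite length and `H¹_m(R) ≅ H⁰_m(coker φ)`;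
in particular `H¹_m(R)` has finite length. -/
theorem stmt_15 (R : Type u) [CommRing R] [IsLocalRing R] [IsNoetherianRing R]
    [IsAdicComplete (maximalIdeal R) R]
    (d : ℕ) (hd2 : 2 ≤ d) (hd : ringKrullDim R = ((d : ℕ∞) : WithBot ℕ∞))
    (K : Type u) [AddCommGroup K] [Module R K] (hK : IsCanonicalModule R d K)
    (hass : ∀ p ∈ associatedPrimes R R,
      ringKrullDim (R ⧸ p) = ringKrullDim R ∨ p = maximalIdeal R) :
    mlen R (LinearMap.ker (LinearMap.lsmul R K)) < ⊤ ∧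
    Nonempty ((lcoh R 1 R) ≃ₗ[R]
      H0 R ((K →ₗ[R] K) ⧸ LinearMap.range (LinearMap.lsmul R K))) ∧
    mlen R (lcoh R 1 R) < ⊤ :=
  main_aux hd2 hd K hK hass
end

section
/- Let R be a Noetherian local ring that is a homomorphic image of a Cohen-Macaulay local ring, with Ass R ⊆ Assh R ∪ {m}. Then the set F = {p ∈ Spec R : ht p > 1 = depth R_p, p ≠ m} is finite. -/
open IsLocalRing Filter Function CategoryTheory

universe u

/-! ### A concrete form of `Hom = 0` and of `depth ≥ 2` -/

/-- No nonzero element of `N` is killed by `Q`. -/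
def DD1 {S : Type*} [CommRing S] (Q : Ideal S) (N : Type*) [AddCommGroup N] [Module S N] : Prop :=
  ∀ m : N, (∀ a ∈ Q, a • m = 0) → m = 0

/-- Every linear map `Q → N` is multiplication by a unique element of `N`. -/
def DD2 {S : Type*} [CommRing S] (Q : Ideal S) (N : Type*) [AddCommGroup N] [Module S N] : Prop :=
  DD1 Q N ∧ ∀ φ : Q →ₗ[S] N, ∃ m : N, ∀ a : Q, φ a = (a : S) • m

section calculus
variable {S : Type*} [CommRing S] {Q : Ideal S}
  {N₁ N₂ N₃ : Type*} [AddCommGroup N₁] [Module S N₁] [AddCommGroup N₂] [Module S N₂]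
  [AddCommGroup N₃] [Module S N₃]

lemma DD2.of_subsingleton [Subsingleton N₁] : DD2 Q N₁ :=
  ⟨fun _ _ => Subsingleton.elim _ _, fun _ => ⟨0, fun _ => Subsingleton.elim _ _⟩⟩

lemma DD1.congr (e : N₁ ≃ₗ[S] N₂) (h : DD1 Q N₁) : DD1 Q N₂ := fun m hm => by
  have := h (e.symm m) (fun a ha => by rw [← map_smul, hm a ha, map_zero])
  simpa using this

lemma DD2.congr (e : N₁ ≃ₗ[S] N₂) (h : DD2 Q N₁) : DD2 Q N₂ := by
  refine ⟨h.1.congr e, fun φ => ?_⟩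
  obtain ⟨m, hm⟩ := h.2 (e.symm.toLinearMap ∘ₗ φ)
  refine ⟨e m, fun a => ?_⟩
  rw [← map_smul, ← hm a]; simp

lemma DD1.of_injective (f : N₁ →ₗ[S] N₂) (hf : Injective f) (h : DD1 Q N₂) : DD1 Q N₁ :=
  fun m hm => hf <| by
    rw [map_zero]; exact h _ fun a ha => by rw [← map_smul, hm a ha, map_zero]

/-- depth lemma: sub -/
lemma DD2.sub (f : N₁ →ₗ[S] N₂) (g : N₂ →ₗ[S] N₃) (hf : Injective f) (hfg : Exact f g)
    (h2 : DD2 Q N₂) (h3 : DD1 Q N₃) : DD2 Q N₁ := by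
  refine ⟨h2.1.of_injective f hf, fun φ => ?_⟩
  obtain ⟨m, hm⟩ := h2.2 (f ∘ₗ φ)
  have : g m = 0 := h3 _ fun a ha => by
    rw [← map_smul, ← hm ⟨a, ha⟩]
    exact hfg.apply_apply_eq_zero _
  obtain ⟨m', rfl⟩ := (hfg m).1 this
  exact ⟨m', fun a => hf <| by rw [map_smul, ← hm a]; rfl⟩

/-- depth lemma: extension -/
lemma DD2.ext (f : N₁ →ₗ[S] N₂) (g : N₂ →ₗ[S] N₃) (hf : Injective f) (hg : Surjective g)
    (hfg : Exact f g) (h1 : DD2 Q N₁) (h3 : DD2 Q N₃) : DD2 Q N₂ := by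
  refine ⟨fun m hm => ?_, fun φ => ?_⟩
  · have : g m = 0 := h3.1 _ fun a ha => by rw [← map_smul, hm a ha, map_zero]
    obtain ⟨m', rfl⟩ := (hfg m).1 this
    rw [h1.1 m' fun a ha => hf (by rw [map_smul, hm a ha, map_zero]), map_zero]
  · obtain ⟨m3, hm3⟩ := h3.2 (g ∘ₗ φ)
    obtain ⟨m, rfl⟩ := hg m3
    let ψ : Q →ₗ[S] N₂ := φ - (LinearMap.toSpanSingleton S N₂ m) ∘ₗ Q.subtype
    have hψ : ∀ a, ∃ b, f b = ψ a := fun a => (hfg _).1 (by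
      have := hm3 a
      simp only [LinearMap.comp_apply] at this
      simp [ψ, this])
    choose χ hχ using hψ
    let χ' : Q →ₗ[S] N₁ :=
      { toFun := χ
        map_add' := fun a b => hf (by simp [hχ])
        map_smul' := fun a b => hf (by simp [hχ]) }
    obtain ⟨m1, hm1⟩ := h1.2 χ'
    refine ⟨m + f m1, fun a => ?_⟩
    have h5 : f (χ a) = f ((a : S) • m1) := congrArg f (hm1 a)
    rw [hχ, map_smul] at h5
    simp only [ψ, LinearMap.sub_apply, LinearMap.comp_apply, LinearMap.toSpanSingleton_apply,
      Submodule.subtype_apply] at h5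
    rw [smul_add, ← h5]; abel

end calculus

section loc
open Pointwise
variable {S : Type u} [CommRing S] [IsNoetherianRing S]

/-- Localization of a linear map at a prime, as an `S`-linear map. -/
noncomputable abbrev lmap (Q : Ideal S) [Q.IsPrime] {M N : Type u} [AddCommGroup M] [Module S M]
    [AddCommGroup N] [Module S N] (g : M →ₗ[S] N) :
    LocalizedModule Q.primeCompl M →ₗ[S] LocalizedModule Q.primeCompl N :=
  IsLocalizedModule.map Q.primeCompl (LocalizedModule.mkLinearMap Q.primeCompl M)
    (LocalizedModule.mkLinearMap Q.primeCompl N) g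

lemma DD1_localized {M : Type u} [AddCommGroup M] [Module S M] (Q : Ideal S) [hQ : Q.IsPrime]
    (h : Q ∉ associatedPrimes S M) : DD1 Q (LocalizedModule Q.primeCompl M) := by
  intro m hm
  by_contra hne
  apply h
  have h2 : maximalIdeal (Localization.AtPrime Q) ∈
      associatedPrimes (Localization.AtPrime Q) (LocalizedModule Q.primeCompl M) := by
    rw [AssociatedPrimes.mem_iff, isAssociatedPrime_iff]
    refine ⟨inferInstance, m, ?_⟩
    apply le_antisymm
    · rw [← IsLocalization.AtPrime.map_eq_maximalIdeal Q, Ideal.map_le_iff_le_comap]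
      intro a ha
      rw [Ideal.mem_comap, Submodule.mem_colon_singleton, algebraMap_smul, hm a ha]
      exact Submodule.zero_mem _
    · refine IsLocalRing.le_maximalIdeal fun hh => hne ?_
      have : (1 : Localization.AtPrime Q) ∈ (⊥ : Submodule _ _).colon {m} := by rw [hh]; trivial
      rw [Submodule.mem_colon_singleton] at this
      simpa using this
  rw [← Module.associatedPrimes.preimage_comap_associatedPrimes_eq_associatedPrimes_of_isLocalizedModule
    Q.primeCompl (Localization.AtPrime Q) (LocalizedModule.mkLinearMap Q.primeCompl M),
    Set.mem_preimage] at h2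
  have e : Ideal.comap (algebraMap S (Localization.AtPrime Q))
      (maximalIdeal (Localization.AtPrime Q)) = Q := IsLocalization.AtPrime.under_maximalIdeal _ Q
  rwa [e] at h2

/-- `y ∈ Q` regular on `M_Q` and `Q ∉ Ass (M / y M)` give depth at least two. -/
lemma DD2_localized {M : Type u} [AddCommGroup M] [Module S M] (Q : Ideal S) [hQ : Q.IsPrime]
    (y : S) (hy : y ∈ Q) (hreg : IsSMulRegular (LocalizedModule Q.primeCompl M) y)
    (h : Q ∉ associatedPrimes S (QuotSMulTop y M)) : DD2 Q (LocalizedModule Q.primeCompl M) := by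
  refine ⟨fun m hm => hreg (by simp only [hm y hy, smul_zero]), fun φ => ?_⟩
  have ex := IsLocalizedModule.map_exact Q.primeCompl
    (LocalizedModule.mkLinearMap Q.primeCompl M) (LocalizedModule.mkLinearMap Q.primeCompl M)
    (LocalizedModule.mkLinearMap Q.primeCompl (QuotSMulTop y M))
    _ _ (LinearMap.exact_lsmul_mkQ_smul_top M y)
  have hy2 : ∀ m, lmap Q (LinearMap.lsmul S M y) m = y • m := by
    intro m
    have : LinearMap.lsmul S M y = y • LinearMap.id := by ext; simp
    rw [lmap, this, map_smul, IsLocalizedModule.map_id]; rfl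
  have hcomm : ∀ a : Q, (a : S) • φ ⟨y, hy⟩ = y • φ a := by
    intro a
    rw [← map_smul, ← map_smul]; congr 1; ext; simp [mul_comm]
  have key : lmap Q (Submodule.mkQ (y • (⊤ : Submodule S M))) (φ ⟨y, hy⟩) = 0 := by
    apply DD1_localized Q h
    intro a ha
    rw [← map_smul, hcomm ⟨a, ha⟩, ← hy2]
    exact ex.apply_apply_eq_zero _
  obtain ⟨m, hm⟩ := (ex _).1 key
  rw [hy2] at hm
  refine ⟨m, fun a => hreg ?_⟩
  simp only
  rw [← hcomm a, ← hm, smul_comm]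

end loc

section generic
lemma exists_avoid {S : Type u} [CommRing S] (I : Ideal S) {A : Set (Ideal S)} (hA : A.Finite) (hp : ∀ P ∈ A, P.IsPrime)
    (h : ∀ P ∈ A, ¬ I ≤ P) : ∃ x ∈ I, ∀ P ∈ A, x ∉ P := by
  by_contra hc
  push Not at hc
  obtain ⟨P, hP, hle⟩ := (I.subset_union_prime_finite hA (f := id) ⊤ ⊤ fun P h _ _ ↦ hp P h).1
    (fun x hx => by
      obtain ⟨P, hP, hxP⟩ := hc x hx
      exact Set.mem_biUnion hP hxP)
  exact h P hP hle

variable {S : Type u} [CommRing S] [IsNoetherianRing S]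

/-- Generic depth: every finite module inherits depth at least two from the ring,
away from a hypersurface. -/
lemma generic_DD2 (hmin : ∀ P ∈ associatedPrimes S S, ∀ P' : Ideal S, P'.IsPrime → P' ≤ P → P' = P)
    (N : Type u) [AddCommGroup N] [Module S N] [hN : Module.Finite S N] :
    ∃ x : S, (∀ P ∈ associatedPrimes S S, x ∉ P) ∧ ∀ (Q : Ideal S) [Q.IsPrime], x ∉ Q →
      DD2 Q (LocalizedModule Q.primeCompl S) → DD2 Q (LocalizedModule Q.primeCompl N) := by
  induction hN using IsNoetherianRing.induction_on_isQuotientEquivQuotientPrime S with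
  | subsingleton N =>
    refine ⟨1, fun P hP h1 => hP.isPrime.ne_top ((Ideal.eq_top_iff_one P).2 h1), fun Q _ _ _ => ?_⟩
    exact DD2.of_subsingleton
  | exact N₁ N₂ N₃ f g hf hg hfg h₁ h₃ =>
    obtain ⟨x, hx, hx'⟩ := h₁
    obtain ⟨z, hz, hz'⟩ := h₃
    refine ⟨x * z, fun P hP h => ?_, fun Q _ hQ hS => ?_⟩
    · rcases hP.isPrime.mem_or_mem h with h | h
      exacts [hx P hP h, hz P hP h]
    · refine DD2.ext (lmap Q f) (lmap Q g) (IsLocalizedModule.map_injective _ _ _ _ hf)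
        (IsLocalizedModule.map_surjective _ _ _ _ hg) (IsLocalizedModule.map_exact _ _ _ _ _ _ hfg)
        (hx' Q (fun h => hQ (Q.mul_mem_right _ h)) hS) (hz' Q (fun h => hQ (Q.mul_mem_left _ h)) hS)
  | quotient N p e =>
    have hfin := associatedPrimes.finite S S
    by_cases hp : p.asIdeal ∈ associatedPrimes S S
    · obtain ⟨_, ι, hι⟩ := (isAssociatedPrime_iff_exists_injective_linearMap _ _).1 hp
      let j : N →ₗ[S] S := ι ∘ₗ e.toLinearMap
      have hj : Injective j := hι.comp e.injective
      let C := S ⧸ LinearMap.range j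
      let B : Set (Ideal S) := associatedPrimes S C \ associatedPrimes S S
      have hB : B.Finite := (associatedPrimes.finite S C).subset Set.sdiff_subset
      obtain ⟨x, hx, hx'⟩ := exists_avoid (∏ b ∈ hB.toFinset, b) hfin (fun P hP => hP.isPrime)
        (fun P hP hle => by
          obtain ⟨b, hb, hbP⟩ := (hP.isPrime.prod_le).1 hle
          have hb' : b ∈ B := by simpa using hb
          exact hb'.2 (hmin P hP b hb'.1.isPrime hbP ▸ hP))
      refine ⟨x, hx', fun Q _ hQ hS => ?_⟩
      refine DD2.sub (lmap Q j) (lmap Q (LinearMap.range j).mkQ)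
        (IsLocalizedModule.map_injective _ _ _ _ hj)
        (IsLocalizedModule.map_exact _ _ _ _ _ _ (LinearMap.exact_map_mkQ_range j)) hS
        (DD1_localized Q fun hass => ?_)
      by_cases hQS : Q ∈ associatedPrimes S S
      · obtain ⟨_, b, hab⟩ := (isAssociatedPrime_iff.1 hQS)
        have h0 := hS.1 (LocalizedModule.mkLinearMap Q.primeCompl S b) (fun a ha => by
          rw [hab, Submodule.mem_colon_singleton] at ha
          rw [← map_smul, (Submodule.mem_bot S).1 ha, map_zero])
        obtain ⟨t, ht⟩ := (IsLocalizedModule.eq_zero_iff Q.primeCompl _).1 h0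
        refine t.2 ?_
        have : (t : S) ∈ (⊥ : Submodule S S).colon {b} := by
          rw [Submodule.mem_colon_singleton]; exact (Submodule.mem_bot S).2 ht
        rw [← hab] at this
        exact this
      · exact hQ (Ideal.le_of_dvd
          (Finset.dvd_prod_of_mem (fun b : Ideal S => b) ((hB.mem_toFinset).2 ⟨hass, hQS⟩)) hx)
    · obtain ⟨x, hx, hx'⟩ := exists_avoid p.asIdeal hfin (fun P hP => hP.isPrime)
        (fun P hP hle => hp (hmin P hP _ p.2 hle ▸ hP))
      refine ⟨x, hx', fun Q _ hQ _ => ?_⟩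
      have : Subsingleton (LocalizedModule Q.primeCompl N) := by
        rw [LocalizedModule.subsingleton_iff]
        intro m
        refine ⟨x, hQ, e.injective ?_⟩
        obtain ⟨r, hr⟩ := Ideal.Quotient.mk_surjective (e m)
        rw [map_smul, ← hr, map_zero]
        change Ideal.Quotient.mk p.asIdeal (x * r) = 0
        exact Ideal.Quotient.eq_zero_iff_mem.2 (Ideal.mul_mem_right _ _ hx)
      exact DD2.of_subsingleton

end generic

section CM
open RingTheory.Sequence Pointwise

lemma dim_quot_succ_le {S : Type*} [CommRing S] {P Q : Ideal S} [P.IsPrime] (h : P < Q) :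
    ringKrullDim (S ⧸ Q) + 1 ≤ ringKrullDim (S ⧸ P) := by
  obtain ⟨r, hr, hr'⟩ := SetLike.exists_of_lt h
  refine ringKrullDim_succ_le_of_surjective (Ideal.Quotient.factor h.le)
    (Ideal.Quotient.factor_surjective h.le) (r := Ideal.Quotient.mk P r) ?_ ?_
  · exact mem_nonZeroDivisors_of_ne_zero (by rwa [Ne, Ideal.Quotient.eq_zero_iff_mem])
  · simpa [Ideal.Quotient.eq_zero_iff_mem] using hr

lemma dim_quot_ne {S : Type*} [CommRing S] [IsLocalRing S] [IsNoetherianRing S] {P : Ideal S}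
    [P.IsPrime] : ∃ n : ℕ, ringKrullDim (S ⧸ P) = n := by
  have h1 : ringKrullDim (S ⧸ P) ≤ ringKrullDim S := ringKrullDim_quotient_le P
  have h2 : ringKrullDim S < ⊤ := ringKrullDim_lt_top
  have h3 : 0 ≤ ringKrullDim (S ⧸ P) := ringKrullDim_nonneg_of_nontrivial
  have h4 := h1.trans_lt h2
  obtain ⟨a, ha⟩ : ∃ a : ℕ∞, ringKrullDim (S ⧸ P) = a := by
    cases h : ringKrullDim (S ⧸ P) with
    | bot => rw [h] at h3; simp at h3
    | coe a => exact ⟨a, rfl⟩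
  cases a with
  | top => rw [ha] at h4; simp at h4
  | coe n => exact ⟨n, ha⟩

variable {S : Type u} [CommRing S] [IsLocalRing S] [IsNoetherianRing S]

/-- depth is at most the dimension of any associated prime. -/
lemma length_le_dim (rs : List S) : ∀ (M : Type u) [AddCommGroup M] [Module S M] [Module.Finite S M],
    (∀ r ∈ rs, r ∈ maximalIdeal S) → IsRegular M rs → ∀ P ∈ associatedPrimes S M,
    (rs.length : WithBot ℕ∞) ≤ ringKrullDim (S ⧸ P) := by
  induction rs with
  | nil =>
    intro M _ _ _ _ _ P hP
    have := hP.isPrime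
    simpa using! ringKrullDim_nonneg_of_nontrivial (R := S ⧸ P)
  | cons x rs ih =>
    intro M _ _ _ hmem hreg P hP
    have hPp := hP.isPrime
    rw [isRegular_cons_iff] at hreg
    obtain ⟨_, u, hu⟩ := isAssociatedPrime_iff.1 hP
    have hu' : ∀ a, a ∈ P ↔ a • u = 0 := fun a => by
      rw [hu, Submodule.mem_colon_singleton, Submodule.mem_bot]
    have hu0 : u ≠ 0 := fun h => hPp.ne_top ((Ideal.eq_top_iff_one P).2 ((hu' 1).2 (by simp [h])))
    have hxP : x ∉ P := fun h => hu0 (hreg.1 (by simpa using (hu' x).1 h))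
    let N : Submodule S M := Submodule.torsionBySet S M (P : Set S)
    have hNmem : ∀ v, v ∈ N ↔ ∀ a ∈ P, a • v = 0 := fun v => by
      simp [N, Submodule.mem_torsionBySet_iff]
    obtain ⟨v, hvN, hvx⟩ : ∃ v ∈ N, v ∉ x • (⊤ : Submodule S M) := by
      by_contra hc
      push Not at hc
      have hle : N ≤ (maximalIdeal S) • N := by
        intro v hv
        obtain ⟨w, -, rfl⟩ := (Submodule.mem_smul_pointwise_iff_exists _ _ _).1 (hc v hv)
        refine Submodule.smul_mem_smul (hmem x (by simp)) ((hNmem w).2 fun a ha => hreg.1 ?_)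
        simp only [smul_zero]
        rw [smul_comm]; exact (hNmem _).1 hv a ha
      have hbot := Submodule.eq_bot_of_le_smul_of_le_jacobson_bot (maximalIdeal S) N
        (IsNoetherian.noetherian N) hle (IsLocalRing.maximalIdeal_le_jacobson _)
      have : u ∈ N := (hNmem u).2 fun a ha => (hu' a).1 ha
      rw [hbot] at this
      exact hu0 ((Submodule.mem_bot S).1 this)
    have hv0 : (Submodule.Quotient.mk v : QuotSMulTop x M) ≠ 0 := by
      rwa [Ne, Submodule.Quotient.mk_eq_zero]
    obtain ⟨Q, hQ, hle⟩ := exists_le_isAssociatedPrime_of_isNoetherianRing S _ hv0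
    have hPQ : P < Q := by
      refine lt_of_le_of_ne (fun a ha => hle ?_) (fun h => hxP (h ▸ hle ?_))
      · rw [Submodule.mem_colon_singleton, ← Submodule.Quotient.mk_smul, (hNmem v).1 hvN a ha]
        simp
      · rw [Submodule.mem_colon_singleton, ← Submodule.Quotient.mk_smul, Submodule.mem_bot,
          Submodule.Quotient.mk_eq_zero]
        exact Submodule.smul_mem_pointwise_smul _ _ _ trivial
    refine le_trans ?_ (dim_quot_succ_le hPQ)
    have := ih (QuotSMulTop x M) (fun r hr => hmem r (by simp [hr])) hreg.2 Q hQ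
    push_cast [List.length_cons]
    gcongr

/-- Exchange: any regular element starts a maximal regular sequence. -/
lemma exchange (M : Type u) [AddCommGroup M] [Module S M] [Module.Finite S M] [Nontrivial M]
    (n : ℕ) (rs : List S) (hlen : rs.length = n + 1)
    (hmem : ∀ r ∈ rs, r ∈ maximalIdeal S) (hreg : IsRegular M rs)
    (y : S) (hy : y ∈ maximalIdeal S) (hyreg : IsSMulRegular M y) :
    ∃ rs' : List S, rs'.length = n ∧ (∀ r ∈ rs', r ∈ maximalIdeal S) ∧
      IsRegular (QuotSMulTop y M) rs' := by
  have lt : ∀ (M : Type u) [AddCommGroup M] [Module S M] [Module.Finite S M] [Nontrivial M],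
      maximalIdeal S • (⊤ : Submodule S M) < ⊤ := fun M _ _ _ _ =>
    (Submodule.top_ne_ideal_smul_of_le_jacobson_annihilator
      (IsLocalRing.maximalIdeal_le_jacobson _)).symm.lt_top
  have : Nontrivial (QuotSMulTop y M) := nontrivial_quotSMulTop_of_mem_maximalIdeal M hy
  have t1 := (ModuleCat.exists_isRegular_tfae (maximalIdeal S) (n + 1) (ModuleCat.of S M)
    (lt M)).out 3 1
  have h2 := t1.1 ⟨rs, hlen, hmem, hreg⟩
  have t2 := (ModuleCat.exists_isRegular_tfae (maximalIdeal S) n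
    (ModuleCat.of S (QuotSMulTop y M)) (lt _)).out 3 1
  refine t2.2 ?_
  intro i hi
  have zero1 := AddCommGrpCat.isZero_of_iff_subsingleton.mpr (h2 i (by omega))
  have zero2 := AddCommGrpCat.isZero_of_iff_subsingleton.mpr (h2 (i + 1) (by omega))
  exact AddCommGrpCat.subsingleton_of_isZero <| ShortComplex.Exact.isZero_of_both_zeros
    ((Abelian.Ext.covariant_sequence_exact₃' _
      (IsSMulRegular.smulShortComplex_shortExact (M := ModuleCat.of S M) hyreg)) i (i + 1) rfl)
    (zero1.eq_zero_of_src _) (zero2.eq_zero_of_tgt _)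

end CM

section final
open RingTheory.Sequence Pointwise

lemma not_DD2_of_idepth_eq_one {R : Type u} [CommRing R] [IsNoetherianRing R] (p : Ideal R)
    [hp : p.IsPrime]
    (h : idepth (Localization.AtPrime p) (Ideal.map (algebraMap R (Localization.AtPrime p)) p)
      (Localization.AtPrime p) = 1) : ¬ DD2 p (Localization.AtPrime p) := by
  intro hD
  set A := Localization.AtPrime p
  have : IsNoetherianRing A := IsLocalization.isNoetherianRing p.primeCompl A inferInstance
  have hmap : Ideal.map (algebraMap R A) p = maximalIdeal A :=
    IsLocalization.AtPrime.map_eq_maximalIdeal p A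
  rw [hmap, idepth] at h
  have hne : Set.Nonempty {n : ℕ∞ | ∃ rs : List A, (rs.length : ℕ∞) = n ∧
      (∀ r ∈ rs, r ∈ maximalIdeal A) ∧ IsRegular A rs} := by
    rw [Set.nonempty_iff_ne_empty]
    intro h0
    rw [h0] at h
    simp at h
  have := hne.to_subtype
  have hmem := ENat.sSup_mem_of_nonempty_of_lt_top (s := {n : ℕ∞ | ∃ rs : List A,
    (rs.length : ℕ∞) = n ∧ (∀ r ∈ rs, r ∈ maximalIdeal A) ∧ IsRegular A rs})
    (by rw [h]; exact ENat.natCast_lt_top 1)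
  rw [h] at hmem
  obtain ⟨rs, hlen, hrs, hreg⟩ := hmem
  obtain ⟨r, rfl⟩ := List.length_eq_one_iff.1 (by exact_mod_cast hlen : rs.length = 1)
  have hr : r ∈ maximalIdeal A := hrs r (by simp)
  have hreg1 : IsSMulRegular A r := ((isRegular_cons_iff _ _ _).1 hreg).1
  have hntr : Nontrivial (QuotSMulTop r A) := ((isRegular_cons_iff _ _ _).1 hreg).2.nontrivial
  have hass : maximalIdeal A ∈ associatedPrimes A (QuotSMulTop r A) := by
    by_contra hcon
    obtain ⟨s, hs, hs'⟩ := exists_avoid (maximalIdeal A)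
      (associatedPrimes.finite A (QuotSMulTop r A)) (fun P hP => hP.isPrime) (fun P hP hle => by
        have hE := (IsLocalRing.maximalIdeal.isMaximal A).eq_of_le hP.isPrime.ne_top hle
        exact hcon (hE ▸ hP))
    have hsreg : IsSMulRegular (QuotSMulTop r A) s := by
      rw [isSMulRegular_iff_right_eq_zero_of_smul]
      intro m hm
      by_contra hm0
      have : s ∈ ⋃ P ∈ associatedPrimes A (QuotSMulTop r A), (P : Set A) := by
        rw [biUnion_associatedPrimes_eq_zero_divisors]; exact ⟨m, hm0, hm⟩
      obtain ⟨P, hP, hsP⟩ := Set.mem_iUnion₂.1 this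
      exact hs' P hP hsP
    have h2 : ((2 : ℕ) : ℕ∞) ≤ 1 := by
      rw [← h]
      refine le_sSup ⟨[r, s], by simp, by simp [hr, hs], ?_⟩
      exact IsRegular.of_isWeaklyRegular_of_mem_maximalIdeal _
        (by intro a ha; simp only [List.mem_cons, List.not_mem_nil, or_false] at ha; rcases ha with rfl | rfl <;> assumption)
        (.cons hreg1 (.cons hsreg (.nil _ _)))
    exact absurd (by exact_mod_cast h2 : (2 : ℕ) ≤ 1) (by norm_num)
  obtain ⟨_, ubar, hu⟩ := isAssociatedPrime_iff.1 hass
  obtain ⟨u, rfl⟩ := Submodule.Quotient.mk_surjective _ ubar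
  have hdiv : ∀ a : p, ∃ v : A, r * v = (a : R) • u := by
    intro a
    have ha : algebraMap R A a ∈ maximalIdeal A := hmap ▸ Ideal.mem_map_of_mem _ a.2
    rw [hu, Submodule.mem_colon_singleton, ← Submodule.Quotient.mk_smul, Submodule.mem_bot,
      Submodule.Quotient.mk_eq_zero] at ha
    obtain ⟨v, -, hv⟩ := (Submodule.mem_smul_pointwise_iff_exists _ _ _).1 ha
    exact ⟨v, by rw [← smul_eq_mul, hv, algebraMap_smul]⟩
  have hcancel : ∀ v w : A, r * v = r * w → v = w := fun v w hvw => hreg1 hvw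
  choose χ hχ using hdiv
  let φ : p →ₗ[R] A :=
    { toFun := χ
      map_add' := fun a b => hcancel _ _ (by rw [mul_add, hχ, hχ, hχ]; simp [add_smul])
      map_smul' := fun a b => hcancel _ _ (by
        rw [hχ, RingHom.id_apply, mul_smul_comm, hχ]; simp [mul_smul]) }
  obtain ⟨m, hm⟩ := hD.2 φ
  have hum : u - r * m = 0 := hD.1 _ fun a ha => by
    have h1 : χ ⟨a, ha⟩ = a • m := hm ⟨a, ha⟩
    rw [smul_sub, ← hχ ⟨a, ha⟩, h1, mul_smul_comm, sub_self]
  have : (1 : A) ∈ maximalIdeal A := by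
    rw [hu, Submodule.mem_colon_singleton, one_smul, Submodule.mem_bot,
      Submodule.Quotient.mk_eq_zero, sub_eq_zero.1 hum]
    exact Submodule.smul_mem_pointwise_smul _ _ _ trivial
  exact (Ideal.ne_top_iff_one _).1 (IsLocalRing.maximalIdeal.isMaximal A).ne_top this

lemma isSMulRegular_of_avoid {S : Type u} [CommRing S] [IsNoetherianRing S] {M : Type u}
    [AddCommGroup M] [Module S M] {y : S} (h : ∀ P ∈ associatedPrimes S M, y ∉ P) :
    IsSMulRegular M y := by
  rw [isSMulRegular_iff_right_eq_zero_of_smul]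
  intro m hm
  by_contra hm0
  have : y ∈ ⋃ P ∈ associatedPrimes S M, (P : Set S) := by
    rw [biUnion_associatedPrimes_eq_zero_divisors]; exact ⟨m, hm0, hm⟩
  obtain ⟨P, hP, hsP⟩ := Set.mem_iUnion₂.1 this
  exact h P hP hsP

lemma isSMulRegular_localized {S : Type u} [CommRing S] [IsNoetherianRing S] {M : Type u}
    [AddCommGroup M] [Module S M] {y : S} (Q : Ideal S) [Q.IsPrime]
    (h : ∀ P ∈ associatedPrimes S M, P ≤ Q → y ∉ P) :
    IsSMulRegular (LocalizedModule Q.primeCompl M) y := by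
  have : IsNoetherianRing (Localization.AtPrime Q) :=
    IsLocalization.isNoetherianRing Q.primeCompl _ inferInstance
  have key : IsSMulRegular (LocalizedModule Q.primeCompl M)
      (algebraMap S (Localization.AtPrime Q) y) := by
    apply isSMulRegular_of_avoid
    intro P hP hy
    have hPp := hP.isPrime
    rw [← Module.associatedPrimes.preimage_comap_associatedPrimes_eq_associatedPrimes_of_isLocalizedModule
      Q.primeCompl (Localization.AtPrime Q) (LocalizedModule.mkLinearMap Q.primeCompl M),
      Set.mem_preimage] at hP
    refine h _ hP ?_ hy
    have e : Ideal.comap (algebraMap S (Localization.AtPrime Q))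
      (maximalIdeal (Localization.AtPrime Q)) = Q := IsLocalization.AtPrime.under_maximalIdeal _ Q
    conv_rhs => rw [← e]
    exact Ideal.comap_mono (IsLocalRing.le_maximalIdeal hPp.ne_top)
  intro a b hab
  apply key
  simpa [algebraMap_smul] using hab

end final

section core
open RingTheory.Sequence Pointwise

lemma dim_quot_comap {R S : Type*} [CommRing R] [CommRing S] (f : S →+* R)
    (hf : Function.Surjective f) (p : Ideal R) :
    ringKrullDim (S ⧸ p.comap f) = ringKrullDim (R ⧸ p) :=
  ringKrullDim_eq_of_ringEquiv (RingEquiv.ofBijective (Ideal.quotientMap p f le_rfl)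
    ⟨Ideal.quotientMap_injective, Ideal.quotientMap_surjective hf⟩)

lemma DD2_localization {R : Type u} [CommRing R] (p : Ideal R) [p.IsPrime]
    (h : DD2 p (LocalizedModule p.primeCompl R)) : DD2 p (Localization.AtPrime p) :=
  h.congr (IsLocalizedModule.iso p.primeCompl (Algebra.linearMap R (Localization.AtPrime p)))

lemma DD2_transfer {R S : Type u} [CommRing R] [CommRing S] [Algebra S R]
    (hf : Function.Surjective (algebraMap S R)) (p : Ideal R) [hp : p.IsPrime]
    (Q : Ideal S) [Q.IsPrime] (hQ : Q = p.comap (algebraMap S R))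
    (h : DD2 Q (LocalizedModule Q.primeCompl R)) : DD2 p (Localization.AtPrime p) := by
  have hsub : Algebra.algebraMapSubmonoid R Q.primeCompl = p.primeCompl := by
    ext a
    constructor
    · rintro ⟨b, hb, rfl⟩ hc
      exact hb (hQ ▸ hc)
    · intro ha
      obtain ⟨b, rfl⟩ := hf a
      exact ⟨b, fun hb => ha (by subst hQ; exact hb), rfl⟩
  have hloc : IsLocalization (Algebra.algebraMapSubmonoid R Q.primeCompl)
      (Localization.AtPrime p) := by rw [hsub]; infer_instance
  have hl := isLocalizedModule_iff_isLocalization.2 hloc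
  have h2 := h.congr (IsLocalizedModule.iso Q.primeCompl
    (IsScalarTower.toAlgHom S R (Localization.AtPrime p)).toLinearMap)
  refine ⟨fun m hm => h2.1 m fun a ha => ?_, fun φ => ?_⟩
  · rw [← algebraMap_smul R a m]
    exact hm _ (by subst hQ; exact ha)
  · let ψ : Q →ₗ[S] Localization.AtPrime p :=
      { toFun := fun a => φ ⟨algebraMap S R a, by have := a.2; subst hQ; exact this⟩
        map_add' := fun a b => by rw [← map_add]; congr 1; ext; simp
        map_smul' := fun a b => by
          rw [RingHom.id_apply, ← algebraMap_smul R a (φ _), ← map_smul]; congr 1; ext; simp [Algebra.smul_def] }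
    obtain ⟨m, hm⟩ := h2.2 ψ
    refine ⟨m, fun a => ?_⟩
    obtain ⟨b, hb⟩ := hf a
    have hbQ : b ∈ Q := by rw [hQ, Ideal.mem_comap, hb]; exact a.2
    have h3 : φ ⟨algebraMap S R b, _⟩ = b • m := hm ⟨b, hbQ⟩
    rw [← hb, algebraMap_smul, ← h3]
    congr 1; ext; exact hb.symm

lemma core (R : Type u) [CommRing R] [IsLocalRing R] [IsNoetherianRing R]
    (S : Type u) [CommRing S] [IsLocalRing S] [IsNoetherianRing S]
    (f : S →+* R) (hf : Function.Surjective f) (n : ℕ) (hS : ringKrullDim S = n)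
    (hR : ringKrullDim R = n) (rs : List S) (hlen : rs.length = n)
    (hmem : ∀ r ∈ rs, r ∈ maximalIdeal S) (hreg : IsRegular S rs)
    (hass : ∀ p ∈ associatedPrimes R R,
      ringKrullDim (R ⧸ p) = ringKrullDim R ∨ p = maximalIdeal R) :
    {p : PrimeSpectrum R | 1 < Order.height p ∧
      idepth (Localization.AtPrime p.asIdeal)
        (Ideal.map (algebraMap R (Localization.AtPrime p.asIdeal)) p.asIdeal)
        (Localization.AtPrime p.asIdeal) = 1 ∧
      p.asIdeal ≠ maximalIdeal R}.Finite := by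
  have hge : ∀ P ∈ associatedPrimes S S, (n : WithBot ℕ∞) ≤ ringKrullDim (S ⧸ P) := by
    intro P hP
    rw [← hlen]
    exact length_le_dim rs S hmem hreg P hP
  have hle : ∀ P : Ideal S, ringKrullDim (S ⧸ P) ≤ n := fun P =>
    hS ▸ ringKrullDim_quotient_le P
  -- a prime strictly above another prime has dimension less than `n`
  have hlt : ∀ P P' : Ideal S, P'.IsPrime → P.IsPrime → P' < P →
      ¬ (n : WithBot ℕ∞) ≤ ringKrullDim (S ⧸ P) := by
    intro P P' hP' hP h hn
    obtain ⟨k, hk⟩ := dim_quot_ne (P := P)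
    have h1 := (dim_quot_succ_le h).trans (hle P')
    rw [hk] at h1 hn
    have h1' : k + 1 ≤ n := by exact_mod_cast h1
    have hn' : n ≤ k := by exact_mod_cast hn
    omega
  have hmin : ∀ P ∈ associatedPrimes S S, ∀ P' : Ideal S, P'.IsPrime → P' ≤ P → P' = P := by
    intro P hP P' hP' hPP
    by_contra hne
    exact hlt P P' hP' hP.isPrime (lt_of_le_of_ne hPP hne) (hge P hP)
  let _ : Algebra S R := f.toAlgebra
  have hfA : Function.Surjective (algebraMap S R) := hf
  have : Module.Finite S R := Module.Finite.of_surjective (Algebra.linearMap S R) hf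
  obtain ⟨x, hx, hgen⟩ := generic_DD2 hmin R
  have hfin : (associatedPrimes R (QuotSMulTop (f x) R)).Finite := associatedPrimes.finite _ _
  refine (hfin.preimage (f := PrimeSpectrum.asIdeal)
    (fun a _ b _ h => PrimeSpectrum.ext h)).subset ?_
  rintro p ⟨hht, hdep, hpm⟩
  by_contra hpA
  rw [Set.mem_preimage] at hpA
  have hpp := p.2
  have hnot := not_DD2_of_idepth_eq_one p.asIdeal hdep
  by_cases hxp : f x ∈ p.asIdeal
  · -- `f x` is regular at `p` and `p` is not associated to `R / x`
    refine hnot (DD2_localization _ (DD2_localized p.asIdeal (f x) hxp ?_ hpA))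
    refine isSMulRegular_localized _ fun P hP hPp hxP => ?_
    have hPprime := hP.isPrime
    have hdim : ringKrullDim (R ⧸ P) = ringKrullDim R := by
      refine (hass P hP).resolve_right fun h => hpm ?_
      subst h
      exact ((IsLocalRing.maximalIdeal.isMaximal R).eq_of_le hpp.ne_top hPp).symm
    have hd2 : ringKrullDim (S ⧸ P.comap f) = n := by rw [dim_quot_comap f hf, hdim, hR]
    obtain ⟨P₀, hP₀, hP₀le⟩ := Ideal.exists_minimalPrimes_le (I := (⊥ : Ideal S))
      (J := P.comap f) bot_le
    have hP₀A : P₀ ∈ associatedPrimes S S := by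
      apply Module.associatedPrimes.minimalPrimes_annihilator_subset_associatedPrimes S S
      rwa [Module.annihilator_eq_bot.2 inferInstance]
    have heq : P₀ = P.comap f := by
      by_contra hne
      exact hlt _ _ hP₀A.isPrime inferInstance (lt_of_le_of_ne hP₀le hne) hd2.ge
    exact hx P₀ hP₀A (heq ▸ hxP)
  · -- generic depth
    let Q : Ideal S := p.asIdeal.comap f
    have hQp : Q.IsPrime := Ideal.IsPrime.comap f
    refine hnot (DD2_transfer hfA p.asIdeal Q rfl (hgen Q hxp ?_))
    -- a chain of length two below `Q`
    have h2 : ((2 : ℕ) : ℕ∞) ≤ Order.height p := by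
      have := Order.add_one_le_of_lt hht
      simpa [one_add_one_eq_two] using this
    obtain ⟨c, hc, hclen⟩ := Order.exists_series_of_le_height p h2
    have hcm : ∀ q q' : PrimeSpectrum R, q < q' → q.asIdeal.comap f < q'.asIdeal.comap f := by
      intro q q' h
      refine lt_of_le_of_ne (Ideal.comap_mono h.le) fun he => h.ne ?_
      exact PrimeSpectrum.ext (Ideal.comap_injective_of_surjective f hf he)
    have hc0 : c ⟨0, by omega⟩ < c ⟨1, by omega⟩ := c.strictMono (by simp [Fin.lt_def])
    have hc1 : c ⟨1, by omega⟩ < p := by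
      rw [← hc]; exact c.strictMono (by simp [Fin.lt_def, hclen])
    have d1 := dim_quot_succ_le (hcm _ _ hc0)
    have d2 := dim_quot_succ_le (hcm _ _ hc1)
    have d0 := hle ((c ⟨0, by omega⟩).asIdeal.comap f)
    obtain ⟨k, hk⟩ := dim_quot_ne (P := Q)
    obtain ⟨k1, hk1⟩ := dim_quot_ne (P := (c ⟨1, by omega⟩).asIdeal.comap f)
    have d1' := d1.trans d0
    rw [hk1] at d1' d2
    change ringKrullDim (S ⧸ Q) + 1 ≤ _ at d2
    rw [hk] at d2
    have e1 : k1 + 1 ≤ n := by exact_mod_cast d1'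
    have e2 : k + 1 ≤ k1 := by exact_mod_cast d2
    obtain ⟨y, hyQ, hy⟩ := exists_avoid Q (associatedPrimes.finite S S)
      (fun P hP => hP.isPrime) (fun P hP hQP => by
        have hh := hge P hP
        have hh2 : ringKrullDim (S ⧸ P) ≤ ringKrullDim (S ⧸ Q) :=
          ringKrullDim_le_of_surjective (Ideal.Quotient.factor hQP)
            (Ideal.Quotient.factor_surjective hQP)
        have hh3 := hh.trans hh2
        rw [hk] at hh3
        have : n ≤ k := by exact_mod_cast hh3
        omega)
    have hyreg : IsSMulRegular S y := isSMulRegular_of_avoid hy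
    have hym : y ∈ maximalIdeal S := IsLocalRing.le_maximalIdeal hQp.ne_top hyQ
    refine DD2_localized Q y hyQ (isSMulRegular_localized Q fun P hP _ => hy P hP) fun hQA => ?_
    obtain ⟨rs', hlen', hmem', hreg'⟩ := exchange S (n - 1) rs (by omega) hmem hreg y hym hyreg
    have hh := length_le_dim rs' _ hmem' hreg' Q hQA
    rw [hk, hlen'] at hh
    have : n - 1 ≤ k := by exact_mod_cast hh
    omega

lemma reduction (R : Type u) [CommRing R] [IsLocalRing R] [IsNoetherianRing R]
    (n : ℕ) (hR : ringKrullDim R = n) (k : ℕ) : ∀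
    (S : Type u) [CommRing S] [IsLocalRing S] [IsNoetherianRing S]
    (f : S →+* R) (_ : Function.Surjective f) (_ : ringKrullDim S = (n + k : ℕ))
    (rs : List S) (_ : rs.length = n + k)
    (_ : ∀ r ∈ rs, r ∈ maximalIdeal S) (_ : IsRegular S rs),
    ∃ (S' : Type u) (_ : CommRing S') (_ : IsLocalRing S') (_ : IsNoetherianRing S')
      (f' : S' →+* R) (rs' : List S'), Function.Surjective f' ∧ ringKrullDim S' = n ∧
      rs'.length = n ∧ (∀ r ∈ rs', r ∈ maximalIdeal S') ∧ IsRegular S' rs' := by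
  induction k with
  | zero =>
    intro S _ _ _ f hf hS rs hlen hmem hreg
    exact ⟨S, _, inferInstance, inferInstance, f, rs, hf, hS, hlen, hmem, hreg⟩
  | succ k ih =>
    intro S _ _ _ f hf hS rs hlen hmem hreg
    obtain ⟨y, hyf, hy⟩ := exists_avoid (RingHom.ker f) (associatedPrimes.finite S S)
      (fun P hP => hP.isPrime) (fun P hP hQP => by
        have hh := length_le_dim rs S hmem hreg P hP
        have hh2 : ringKrullDim (S ⧸ P) ≤ ringKrullDim (S ⧸ RingHom.ker f) :=
          ringKrullDim_le_of_surjective (Ideal.Quotient.factor hQP)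
            (Ideal.Quotient.factor_surjective hQP)
        have hh3 := hh.trans hh2
        rw [ringKrullDim_eq_of_ringEquiv (RingHom.quotientKerEquivOfSurjective hf), hR, hlen] at hh3
        have : n + (k + 1) ≤ n := by exact_mod_cast hh3
        omega)
    have hyreg : IsSMulRegular S y := isSMulRegular_of_avoid hy
    have hker : RingHom.ker f ≠ ⊤ := RingHom.ker_ne_top f
    have hym : y ∈ maximalIdeal S := IsLocalRing.le_maximalIdeal hker hyf
    obtain ⟨rs', hlen', hmem', hreg'⟩ := exchange S (n + k) rs (by omega) hmem hreg y hym hyreg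
    let I : Ideal S := Ideal.span {y}
    have hI : I ≤ RingHom.ker f := by
      rw [Ideal.span_singleton_le_iff_mem]; exact hyf
    have hIm : I ≤ maximalIdeal S := by
      rw [Ideal.span_singleton_le_iff_mem]; exact hym
    have : Nontrivial (S ⧸ I) := Ideal.Quotient.nontrivial_iff.2
      (fun h => (IsLocalRing.maximalIdeal.isMaximal S).ne_top (top_le_iff.1 (h ▸ hIm)))
    have hloc : IsLocalRing (S ⧸ I) :=
      IsLocalRing.of_surjective' (Ideal.Quotient.mk I) Ideal.Quotient.mk_surjective
    have hkerlift : ∀ a ∈ I, f a = 0 := fun a ha => hI ha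
    have hdim := ringKrullDim_quotient_span_singleton_succ_eq_ringKrullDim (x := y)
      (by simpa using hyreg) hym
    have hdim' : ringKrullDim (S ⧸ I) = (n + k : ℕ) := by
      have h0 : 0 ≤ ringKrullDim (S ⧸ I) := ringKrullDim_nonneg_of_nontrivial
      change ringKrullDim (S ⧸ I) + 1 = _ at hdim
      rw [hS] at hdim
      cases h : ringKrullDim (S ⧸ I) with
      | bot => rw [h] at h0; simp at h0
      | coe c =>
        rw [h] at hdim
        have h1 : c + 1 = ((n + (k + 1) : ℕ) : ℕ∞) := by exact_mod_cast hdim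
        cases c with
        | top => exact absurd h1 (by rw [top_add]; exact ENat.top_ne_natCast _)
        | coe c =>
          have h2 : c + 1 = n + (k + 1) := by exact_mod_cast h1
          have : c = n + k := by omega
          rw [this]; rfl
    have hwr : IsWeaklyRegular (S ⧸ I) (rs'.map (algebraMap S (S ⧸ I))) := by
      rw [isWeaklyRegular_map_algebraMap_iff]
      have hE : y • (⊤ : Submodule S S) = I := by
        ext a
        rw [Submodule.mem_smul_pointwise_iff_exists, Ideal.mem_span_singleton']
        constructor
        · rintro ⟨b, -, rfl⟩; exact ⟨b, mul_comm _ _⟩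
        · rintro ⟨b, rfl⟩; exact ⟨b, trivial, mul_comm _ _⟩
      exact ((Submodule.quotEquivOfEq _ _ hE).isWeaklyRegular_congr rs').1 hreg'.toIsWeaklyRegular
    have hmemq : ∀ r ∈ rs'.map (algebraMap S (S ⧸ I)), r ∈ maximalIdeal (S ⧸ I) := by
      intro r hr
      obtain ⟨a, ha, rfl⟩ := List.mem_map.1 hr
      have h1 := hmem' a ha
      rw [mem_maximalIdeal, mem_nonunits_iff] at h1 ⊢
      intro hu
      obtain ⟨v, hv⟩ := hu.exists_right_inv
      obtain ⟨b, rfl⟩ := Ideal.Quotient.mk_surjective v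
      have h2 : a * b - 1 ∈ I := by
        rw [← Ideal.Quotient.eq_zero_iff_mem, map_sub, map_mul, map_one, sub_eq_zero]
        exact hv
      have h3 := hIm h2
      have h4 : (1 : S) ∈ maximalIdeal S := by
        have := (maximalIdeal S).sub_mem ((maximalIdeal S).mul_mem_right b (hmem' a ha)) h3
        rwa [sub_sub_cancel] at this
      exact (Ideal.ne_top_iff_one _).1 (IsLocalRing.maximalIdeal.isMaximal S).ne_top h4
    exact ih (S ⧸ I) (Ideal.Quotient.lift I f hkerlift)
      (Ideal.Quotient.lift_surjective_of_surjective I hkerlift hf) hdim' _ (by simp [hlen'])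
      hmemq (IsRegular.of_isWeaklyRegular_of_mem_maximalIdeal _ hmemq hwr)

end core

lemma exists_dim (R : Type u) [CommRing R] [IsLocalRing R] [IsNoetherianRing R] :
    ∃ n : ℕ, ringKrullDim R = n := by
  have h2 : ringKrullDim R < ⊤ := ringKrullDim_lt_top
  have h3 : 0 ≤ ringKrullDim R := ringKrullDim_nonneg_of_nontrivial
  cases h : ringKrullDim R with
  | bot => rw [h] at h3; simp at h3
  | coe a =>
    cases a with
    | top => rw [h] at h2; simp at h2
    | coe n => exact ⟨n, rfl⟩

lemma exists_regular_seq (S : Type u) [CommRing S] [IsLocalRing S] [IsNoetherianRing S]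
    (hCM : IsCMRing S) {N : ℕ} (hS : ringKrullDim S = N) :
    ∃ rs : List S, rs.length = N ∧ (∀ r ∈ rs, r ∈ maximalIdeal S) ∧
      RingTheory.Sequence.IsRegular S rs := by
  have h : idepth S (maximalIdeal S) S = N := by
    have h0 : ((idepth S (maximalIdeal S) S : ℕ∞) : WithBot ℕ∞) = N := hS ▸ hCM
    exact_mod_cast h0
  rw [idepth] at h
  have hne : Nonempty {n : ℕ∞ | ∃ rs : List S, (rs.length : ℕ∞) = n ∧
      (∀ r ∈ rs, r ∈ maximalIdeal S) ∧ RingTheory.Sequence.IsRegular S rs} :=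
    ⟨⟨0, [], by simp, by simp, .nil _ _⟩⟩
  have hm := ENat.sSup_mem_of_nonempty_of_lt_top (by rw [h]; exact ENat.natCast_lt_top N)
  rw [h] at hm
  obtain ⟨rs, hlen, hrs, hreg⟩ := hm
  exact ⟨rs, by exact_mod_cast hlen, hrs, hreg⟩

/-- **Goto–Nakamura.** If `R` is a homomorphic image of a Cohen–Macaulay local ring and
`Ass R ⊆ Assh R ∪ {m}`, then `{p ∈ Spec R : ht p > 1 = depth R_p, p ≠ m}` is finite. -/
theorem stmt_16 (R : Type u) [CommRing R] [IsLocalRing R] [IsNoetherianRing R]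
    (S : Type u) [CommRing S] [IsLocalRing S] [IsNoetherianRing S]
    (hCM : IsCMRing S) (f : S →+* R) (hf : Function.Surjective f)
    (hass : ∀ p ∈ associatedPrimes R R,
      ringKrullDim (R ⧸ p) = ringKrullDim R ∨ p = maximalIdeal R) :
    {p : PrimeSpectrum R | 1 < Order.height p ∧
      idepth (Localization.AtPrime p.asIdeal)
        (Ideal.map (algebraMap R (Localization.AtPrime p.asIdeal)) p.asIdeal)
        (Localization.AtPrime p.asIdeal) = 1 ∧
      p.asIdeal ≠ maximalIdeal R}.Finite := by
  obtain ⟨n, hR⟩ : ∃ n : ℕ, ringKrullDim R = n := exists_dim R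
  obtain ⟨N, hS⟩ : ∃ n : ℕ, ringKrullDim S = n := exists_dim S
  have hle : ringKrullDim R ≤ ringKrullDim S := ringKrullDim_le_of_surjective f hf
  rw [hR, hS] at hle
  have hle' : n ≤ N := by exact_mod_cast hle
  obtain ⟨k, rfl⟩ := Nat.exists_eq_add_of_le hle'
  obtain ⟨rs, hlen, hmem, hreg⟩ := exists_regular_seq S hCM hS
  obtain ⟨S', _, _, _, f', rs', hf', hS', hlen', hmem', hreg'⟩ :=
    reduction R n hR k S f hf hS rs hlen hmem hreg
  exact core R S' f' hf' n hS' hR rs' hlen' hmem' hreg' hass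
end

section
/- Let k be a field, S = k[[x,y]], and R = S/((x) ∩ (x³,y)). Then R is a 1-dimensional generalized Cohen-Macaulay local ring, e₀((y),R) = 1, λ(R/yR) = 3, λ(H⁰_m(R)) = 2, and y is a standard parameter for R, but R is not Buchsbaum. -/
open IsLocalRing Filter Function CategoryTheory

universe u

/-- A Buchsbaum local ring of dimension `d`: the difference `λ(R/q) - e₀(q)` is the same for
all parameter ideals `q`. -/
def IsBuchsbaum (R : Type u) [CommRing R] [IsLocalRing R] (d : ℕ) : Prop :=
  ∃ c : ℤ, ∀ q : Ideal R, IsParameterIdeal R q d R →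
    ∀ e : ℕ → ℤ, HasHilbCoeffs R q R d e →
    ∀ l1 : ℕ, mlen R (R ⧸ (q • (⊤ : Submodule R R))) = ((l1 : ℕ∞) : WithBot ℕ∞) →
      (l1 : ℤ) - e 0 = c

/-- The ideal `(x) ∩ (x³, y)` of `k[[x,y]]`. -/
noncomputable def exIdeal (k : Type u) [Field k] : Ideal (MvPowerSeries (Fin 2) k) :=
  Ideal.span {MvPowerSeries.X 0} ⊓
    Ideal.span {MvPowerSeries.X 0 ^ 3, MvPowerSeries.X 1}

/-- The ring `R = k[[x,y]]/((x) ∩ (x³,y))`. -/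
noncomputable abbrev exRing (k : Type u) [Field k] : Type u :=
  MvPowerSeries (Fin 2) k ⧸ exIdeal k

namespace Ex18

/-- Adding a socle element to an ideal drops the colength by one. -/
lemma length_step {R : Type u} [CommRing R] [IsLocalRing R] (I J : Ideal R) (a : R) (ha : a ∉ I)
    (hm : ∀ r ∈ maximalIdeal R, r * a ∈ I) (hJ : J = I ⊔ Ideal.span {a}) :
    Module.length R (R ⧸ I) = Module.length R (R ⧸ J) + 1 := by
  subst hJ
  have h1 : IsSimpleModule R (R ⧸ maximalIdeal R) :=
    isSimpleModule_iff_isCoatom.mpr (maximalIdeal.isMaximal R).out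
  rw [← Module.length_eq_one R (R ⧸ maximalIdeal R), add_comm]
  let f0 : R →ₗ[R] R ⧸ I := (Submodule.mkQ I).comp (LinearMap.toSpanSingleton R R a)
  have hf0 : ∀ r, f0 r = Submodule.Quotient.mk (r * a) := fun r => rfl
  have hle : maximalIdeal R ≤ LinearMap.ker f0 := by
    intro r hr
    rw [LinearMap.mem_ker, hf0, Submodule.Quotient.mk_eq_zero]
    exact hm r hr
  have hker : LinearMap.ker f0 ≤ maximalIdeal R := by
    intro r hr
    rw [LinearMap.mem_ker, hf0, Submodule.Quotient.mk_eq_zero] at hr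
    rw [mem_maximalIdeal, mem_nonunits_iff]
    intro hu
    obtain ⟨v, hv⟩ := hu.exists_left_inv
    apply ha
    have := I.mul_mem_left v hr
    rwa [← mul_assoc, hv, one_mul] at this
  let f : (R ⧸ maximalIdeal R) →ₗ[R] R ⧸ I := Submodule.liftQ (maximalIdeal R) f0 hle
  let g : (R ⧸ I) →ₗ[R] R ⧸ (I ⊔ Ideal.span {a}) := Submodule.factor le_sup_left
  refine Module.length_eq_add_of_exact f g ?_ ?_ ?_
  · rw [← LinearMap.ker_eq_bot]
    exact Submodule.ker_liftQ_eq_bot _ _ _ hker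
  · exact Submodule.factor_surjective _
  · intro z
    obtain ⟨z, rfl⟩ := Submodule.Quotient.mk_surjective _ z
    have : g (Submodule.Quotient.mk z) = Submodule.Quotient.mk z := rfl
    rw [this, Submodule.Quotient.mk_eq_zero]
    constructor
    · intro h
      obtain ⟨i, hi, b, hb, rfl⟩ := Submodule.mem_sup.mp h
      obtain ⟨c, rfl⟩ := Ideal.mem_span_singleton'.mp hb
      refine ⟨Submodule.Quotient.mk c, ?_⟩
      change Submodule.Quotient.mk (c * a) = Submodule.Quotient.mk (i + c * a)
      rw [Submodule.Quotient.eq]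
      simpa using hi
    · rintro ⟨c, hc⟩
      obtain ⟨c, rfl⟩ := Submodule.Quotient.mk_surjective _ c
      change Submodule.Quotient.mk (c * a) = Submodule.Quotient.mk z at hc
      rw [Submodule.Quotient.eq] at hc
      have : z = -(c * a - z) + c * a := by ring
      rw [this]
      exact Submodule.add_mem_sup (I.neg_mem hc) (Ideal.mem_span_singleton'.mpr ⟨c, rfl⟩)

lemma mlen_eq {R : Type u} [CommRing R] (M : Type u) [AddCommGroup M] [Module R M] :
    mlen R M = ((Module.length R M : ℕ∞) : WithBot ℕ∞) := (Module.coe_length R M).symm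

/-- The abstract properties of the ring of the example. -/
structure Good (R : Type u) [CommRing R] (x y : R) : Prop where
  x3 : x ^ 3 = 0
  xy : x * y = 0
  x2 : x ^ 2 ≠ 0
  yn : ∀ n : ℕ, y ^ n ≠ 0
  dec : ∀ f : R, (∃ g, f = x * g) ∨ ∃ (n : ℕ) (u g : R), IsUnit u ∧ f = u * y ^ n + x * g

section

lemma Good.x_mem {R : Type u} [CommRing R] [IsLocalRing R] {x y : R} (h : Good R x y) :
    x ∈ maximalIdeal R := by
  rw [mem_maximalIdeal, mem_nonunits_iff]
  intro hu
  have := (hu.pow 3)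
  rw [h.x3] at this
  exact not_isUnit_zero this

lemma Good.y_mem {R : Type u} [CommRing R] [IsLocalRing R] {x y : R} (h : Good R x y) :
    y ∈ maximalIdeal R := by
  rw [mem_maximalIdeal, mem_nonunits_iff]
  intro hu
  have := hu.mul_left_eq_zero.mp h.xy
  exact h.x2 (by rw [this]; ring)

lemma Good.mem_max {R : Type u} [CommRing R] [IsLocalRing R] {x y : R} (h : Good R x y)
    {f : R} (hf : f ∈ maximalIdeal R) : ∃ a b, f = a * x + b * y := by
  rcases h.dec f with ⟨g, rfl⟩ | ⟨n, u, g, hu, rfl⟩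
  · exact ⟨g, 0, by ring⟩
  · rcases n with _ | n
    · exfalso
      have h1 : u ∈ maximalIdeal R := by
        have := (maximalIdeal R).sub_mem hf ((maximalIdeal R).mul_mem_right g h.x_mem)
        simpa using this
      exact h1 hu
    · exact ⟨g, u * y ^ n, by ring⟩

lemma Good.max_eq {R : Type u} [CommRing R] [IsLocalRing R] {x y : R} (h : Good R x y) :
    maximalIdeal R = Ideal.span {x, y} := by
  apply le_antisymm
  · intro f hf
    obtain ⟨a, b, rfl⟩ := h.mem_max hf
    exact Ideal.mem_span_pair.mpr ⟨a, b, rfl⟩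
  · rw [Ideal.span_le]
    rintro z (rfl | rfl)
    exacts [h.x_mem, h.y_mem]

lemma Good.max_mul {R : Type u} [CommRing R] [IsLocalRing R] {x y : R} (h : Good R x y)
    {I : Ideal R} {a : R} (hx : x * a ∈ I) (hy : y * a ∈ I) :
    ∀ r ∈ maximalIdeal R, r * a ∈ I := by
  intro r hr
  obtain ⟨c, d, rfl⟩ := h.mem_max hr
  have : (c * x + d * y) * a = c * (x * a) + d * (y * a) := by ring
  rw [this]
  exact I.add_mem (I.mul_mem_left _ hx) (I.mul_mem_left _ hy)

/-- Elements killed by a power of `y` are multiples of `x`. -/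
lemma Good.ann_y {R : Type u} [CommRing R] [IsLocalRing R] {x y : R} (h : Good R x y)
    {f : R} {n : ℕ} (hf : f * y ^ n = 0) : ∃ g, f = x * g := by
  rcases h.dec f with hg | ⟨m, u, g, hu, rfl⟩
  · exact hg
  · exfalso
    apply h.yn (m + n + 1)
    rw [← hu.mul_right_eq_zero]
    linear_combination y * hf - g * y ^ n * h.xy

lemma Good.ann_x {R : Type u} [CommRing R] [IsLocalRing R] {x y : R} (h : Good R x y)
    {f : R} : f * x = 0 ↔ f ∈ Ideal.span {x ^ 2, y} := by
  rw [Ideal.mem_span_pair]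
  constructor
  · intro hf
    have h1 : f ∈ maximalIdeal R := by
      intro hu
      have := hu.mul_right_eq_zero.mp hf
      exact h.x2 (by rw [this]; ring)
    obtain ⟨a, b, rfl⟩ := h.mem_max h1
    have h2 : a ∈ maximalIdeal R := by
      intro hu
      refine h.x2 (hu.mul_right_eq_zero.mp ?_)
      linear_combination hf - b * h.xy
    obtain ⟨c, d, rfl⟩ := h.mem_max h2
    exact ⟨c, b, by linear_combination - d * h.xy⟩
  · rintro ⟨a, b, rfl⟩
    linear_combination a * h.x3 + b * h.xy

lemma Good.y_pow_notMem {R : Type u} [CommRing R] [IsLocalRing R] {x y : R} (h : Good R x y)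
    (n : ℕ) : y ^ n ∉ Ideal.span {y ^ (n + 1)} := by
  intro hn
  obtain ⟨f, hf⟩ := Ideal.mem_span_singleton'.mp hn
  have hu : IsUnit (1 - f * y) := by
    by_contra hu
    have h1 : 1 - f * y ∈ maximalIdeal R := hu
    have h2 := (maximalIdeal R).add_mem h1 ((maximalIdeal R).mul_mem_left f h.y_mem)
    rw [sub_add_cancel] at h2
    exact (Ideal.ne_top_iff_one _).mp (maximalIdeal.isMaximal R).ne_top h2
  refine h.yn n (hu.mul_right_eq_zero.mp ?_)
  linear_combination -hf

lemma length_max (R : Type u) [CommRing R] [IsLocalRing R] :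
    Module.length R (R ⧸ maximalIdeal R) = 1 := by
  have h1 : IsSimpleModule R (R ⧸ maximalIdeal R) :=
    isSimpleModule_iff_isCoatom.mpr (maximalIdeal.isMaximal R).out
  exact Module.length_eq_one _ _

lemma Good.length_x2y {R : Type u} [CommRing R] [IsLocalRing R] {x y : R} (h : Good R x y) :
    Module.length R (R ⧸ Ideal.span {x ^ 2, y}) = 2 := by
  rw [length_step (Ideal.span {x ^ 2, y}) (maximalIdeal R) x ?_ (h.max_mul ?_ ?_) ?_, length_max]
  · norm_num
  · rw [← h.ann_x]
    intro h0
    exact h.x2 (by linear_combination h0)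
  · exact Ideal.mem_span_pair.mpr ⟨1, 0, by ring⟩
  · exact Ideal.mem_span_pair.mpr ⟨0, x, by ring⟩
  · rw [h.max_eq]
    apply le_antisymm
    · rw [Ideal.span_le]
      rintro z (rfl | rfl)
      · exact Ideal.mem_sup_right (Ideal.mem_span_singleton_self _)
      · exact Ideal.mem_sup_left (Ideal.subset_span (by simp))
    · rw [sup_le_iff, Ideal.span_le, Ideal.span_le]
      constructor
      · rintro z (rfl | rfl)
        · exact Ideal.mem_span_pair.mpr ⟨x, 0, by ring⟩
        · exact Ideal.mem_span_pair.mpr ⟨0, 1, by ring⟩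
      · rintro z rfl
        exact Ideal.mem_span_pair.mpr ⟨1, 0, by ring⟩

lemma Good.length_y {R : Type u} [CommRing R] [IsLocalRing R] {x y : R} (h : Good R x y) :
    Module.length R (R ⧸ Ideal.span {y}) = 3 := by
  rw [length_step (Ideal.span {y}) (Ideal.span {x ^ 2, y}) (x ^ 2) ?_ (h.max_mul ?_ ?_) ?_,
    h.length_x2y]
  · norm_num
  · intro hm
    obtain ⟨f, hf⟩ := Ideal.mem_span_singleton'.mp hm
    have : f * y ^ 2 = 0 := by linear_combination y * hf + x * h.xy
    obtain ⟨g, rfl⟩ := h.ann_y this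
    exact h.x2 (by linear_combination - hf + g * h.xy)
  · rw [← pow_succ', h.x3]; exact zero_mem _
  · exact Ideal.mem_span_singleton'.mpr ⟨x ^ 2, by ring⟩
  · rw [← Ideal.span_union, Set.union_comm]; rfl

lemma Good.length_yn {R : Type u} [CommRing R] [IsLocalRing R] {x y : R} (h : Good R x y)
    (n : ℕ) : Module.length R (R ⧸ Ideal.span {y ^ (n + 1)}) = ((n + 3 : ℕ) : ℕ∞) := by
  induction n with
  | zero => rw [zero_add, pow_one, h.length_y]; rfl
  | succ n ih =>
    rw [length_step (Ideal.span {y ^ (n + 1 + 1)}) (Ideal.span {y ^ (n + 1)}) (y ^ (n + 1))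
      (h.y_pow_notMem _) (h.max_mul ?_ ?_) ?_, ih]
    · push_cast; ring
    · have : x * y ^ (n + 1) = 0 := by linear_combination y ^ n * h.xy
      rw [this]; exact zero_mem _
    · exact Ideal.mem_span_singleton'.mpr ⟨1, by ring⟩
    · symm
      rw [sup_eq_right, Ideal.span_singleton_le_span_singleton]
      exact pow_dvd_pow _ (by omega)

lemma Good.length_xy {R : Type u} [CommRing R] [IsLocalRing R] {x y : R} (h : Good R x y) :
    Module.length R (R ⧸ Ideal.span {x + y}) = 2 := by
  rw [length_step (Ideal.span {x + y}) (maximalIdeal R) x ?_ (h.max_mul ?_ ?_) ?_, length_max]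
  · norm_num
  · intro hm
    obtain ⟨f, hf⟩ := Ideal.mem_span_singleton'.mp hm
    have : f * y ^ 2 = 0 := by linear_combination y * hf + (1 - f) * h.xy
    obtain ⟨g, rfl⟩ := h.ann_y this
    exact h.x2 (by linear_combination - x * hf + g * h.x3 + x * g * h.xy)
  · exact Ideal.mem_span_singleton'.mpr ⟨x, by linear_combination h.xy⟩
  · rw [mul_comm, h.xy]; exact zero_mem _
  · rw [h.max_eq]
    apply le_antisymm
    · rw [Ideal.span_le]
      rintro z (rfl | rfl)
      · exact Ideal.mem_sup_right (Ideal.mem_span_singleton_self _)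
      · have h1 : (x + z) + (-1) * x ∈ Ideal.span {x + z} ⊔ Ideal.span {x} :=
          Submodule.add_mem_sup (Ideal.mem_span_singleton_self _)
            (Ideal.mul_mem_left _ _ (Ideal.mem_span_singleton_self _))
        have h2 : (x + z) + (-1) * x = z := by ring
        rw [h2] at h1
        exact h1
    · rw [sup_le_iff, Ideal.span_le, Ideal.span_le]
      constructor
      · rintro z rfl
        exact Ideal.mem_span_pair.mpr ⟨1, 1, by ring⟩
      · rintro z rfl
        exact Ideal.mem_span_pair.mpr ⟨1, 0, by ring⟩

lemma Good.xy_pow {R : Type u} [CommRing R] {x y : R} (h : Good R x y)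
    (n : ℕ) : (x + y) ^ (n + 3) = y ^ (n + 3) := by
  induction n with
  | zero => linear_combination h.x3 + (3 * x + 3 * y) * h.xy
  | succ n ih =>
    rw [show n + 1 + 3 = (n + 3) + 1 by ring, pow_succ, ih]
    linear_combination y ^ (n + 2) * h.xy

lemma Good.krull {R : Type u} [CommRing R] [IsLocalRing R] {x y : R} (h : Good R x y) :
    ringKrullDim R = ((1 : ℕ∞) : WithBot ℕ∞) := by
  have hx : ∀ p : Ideal R, p.IsPrime → x ∈ p := fun p hp =>
    hp.mem_of_pow_mem 3 (by rw [h.x3]; exact zero_mem _)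
  apply le_antisymm
  · have : Ring.KrullDimLE 1 R := by
      apply Ring.KrullDimLE.mk₁
      intro p hp
      by_cases hy : y ∈ p
      · right
        have : p = maximalIdeal R := by
          apply le_antisymm (le_maximalIdeal hp.ne_top)
          rw [h.max_eq, Ideal.span_le]
          rintro z (rfl | rfl)
          exacts [hx p hp, hy]
        rw [this]; exact maximalIdeal.isMaximal R
      · left
        refine ⟨⟨hp, bot_le⟩, ?_⟩
        rintro q ⟨hq, -⟩ hqp f hf
        rcases h.dec f with ⟨g, rfl⟩ | ⟨n, u, g, hu, rfl⟩
        · exact q.mul_mem_right _ (hx q hq)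
        · exfalso
          have h1 := p.sub_mem hf (p.mul_mem_right g (hx p hp))
          rw [add_sub_cancel_right, Ideal.unit_mul_mem_iff_mem p hu] at h1
          exact hy (hp.mem_of_pow_mem n h1)
    exact (Ring.krullDimLE_iff.mp this)
  · by_contra hlt
    rw [not_le] at hlt
    have h0 : Ring.KrullDimLE 0 R := by
      rw [Ring.krullDimLE_iff]
      exact Order.le_of_lt_succ hlt
    obtain ⟨n, hn⟩ := Ring.KrullDimLE.isNilpotent_iff_mem_maximalIdeal.mpr h.y_mem
    exact h.yn n hn

lemma Good.H0_eq {R : Type u} [CommRing R] [IsLocalRing R] {x y : R} (h : Good R x y) :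
    H0 R R = Ideal.span {x} := by
  apply le_antisymm
  · refine iSup_le fun n f hf => ?_
    rw [Submodule.mem_torsionBySet_iff] at hf
    have := hf ⟨y ^ n, Ideal.pow_mem_pow h.y_mem n⟩
    obtain ⟨g, rfl⟩ := h.ann_y (f := f) (n := n) (by rw [mul_comm]; exact this)
    exact Ideal.mul_mem_right _ _ (Ideal.mem_span_singleton_self _)
  · rw [Ideal.span_singleton_le_iff_mem]
    refine (le_iSup (fun n : ℕ => Submodule.torsionBySet R R
      ((maximalIdeal R ^ n : Ideal R) : Set R)) 2) ?_
    rw [Submodule.mem_torsionBySet_iff]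
    rintro ⟨r, hr⟩
    change r * x = 0
    have hr' : r ∈ maximalIdeal R ^ 2 := hr
    rw [h.ann_x]
    revert hr'
    suffices maximalIdeal R ^ 2 ≤ Ideal.span {x ^ 2, y} from fun h => this h
    rw [pow_two, Ideal.mul_le]
    intro r hr s hs
    obtain ⟨a, b, rfl⟩ := h.mem_max hr
    obtain ⟨c, d, rfl⟩ := h.mem_max hs
    exact Ideal.mem_span_pair.mpr ⟨a * c, a * d * x + b * c * x + b * d * y, by ring⟩

lemma Good.length_H0 {R : Type u} [CommRing R] [IsLocalRing R] {x y : R} (h : Good R x y) :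
    Module.length R (H0 R R) = 2 := by
  rw [h.H0_eq, ← h.length_x2y]
  have hk : LinearMap.ker (LinearMap.toSpanSingleton R R x) = Ideal.span {x ^ 2, y} := by
    ext f
    rw [← h.ann_x, LinearMap.mem_ker]
    rfl
  have hr : LinearMap.range (LinearMap.toSpanSingleton R R x) = Ideal.span {x} :=
    LinearMap.range_toSpanSingleton x
  rw [← hk, ← hr]
  exact (LinearMap.quotKerEquivRange _).symm.length_eq

lemma hsPoly_one (e : ℕ → ℤ) (n : ℕ) : hsPoly 1 e n = e 0 * n - e 1 := by
  simp [hsPoly, Finset.sum_range_succ]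
  ring

lemma mlen_quot {R : Type u} [CommRing R] (I J : Ideal R) (hIJ : I = J) :
    mlen R (R ⧸ (I • (⊤ : Submodule R R))) = ((Module.length R (R ⧸ J) : ℕ∞) : WithBot ℕ∞) := by
  subst hIJ
  rw [smul_eq_mul, Ideal.mul_top, mlen_eq]

lemma Good.hilb_y {R : Type u} [CommRing R] [IsLocalRing R] {x y : R} (h : Good R x y) (n : ℕ) :
    mlen R (R ⧸ (Ideal.span {y} ^ (n + 1) • (⊤ : Submodule R R))) =
      (((n + 3 : ℕ) : ℕ∞) : WithBot ℕ∞) := by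
  rw [mlen_quot _ _ (Ideal.span_singleton_pow y (n + 1)), h.length_yn]

lemma Good.hilb_coeffs {R : Type u} [CommRing R] [IsLocalRing R] {x y : R} (h : Good R x y)
    (e : ℕ → ℤ) (he : HasHilbCoeffs R (Ideal.span {y}) R 1 e) : e 0 = 1 := by
  obtain ⟨l, hl, hev⟩ := he
  obtain ⟨N, hN⟩ := eventually_atTop.mp hev
  have key : ∀ n, l (n + 1) = n + 3 := by
    intro n
    have h1 := (hl (n + 1)).symm.trans (h.hilb_y n)
    exact_mod_cast h1
  have h1 := hN (N + 1) (by omega)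
  have h2 := hN (N + 1 + 1) (by omega)
  rw [key, hsPoly_one] at h1 h2
  push_cast at h1 h2
  linarith

lemma zero_pow_quot {R : Type u} [CommRing R] (I : Ideal R) :
    mlen R (R ⧸ (I ^ 0 • (⊤ : Submodule R R))) = ((0 : ℕ∞) : WithBot ℕ∞) := by
  rw [mlen_quot (I ^ 0) ⊤ (by simp)]
  have : Subsingleton (R ⧸ (⊤ : Ideal R)) := Ideal.Quotient.subsingleton_iff.mpr rfl
  rw [Module.length_eq_zero]

lemma Good.has_y {R : Type u} [CommRing R] [IsLocalRing R] {x y : R} (h : Good R x y) :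
    HasHilbCoeffs R (Ideal.span {y}) R 1 (fun i => if i = 0 then 1 else -2) := by
  refine ⟨fun n => if n = 0 then 0 else n + 2, ?_, ?_⟩
  · rintro (_ | n)
    · simpa using zero_pow_quot (Ideal.span {y})
    · rw [h.hilb_y]
      simp [add_assoc]
  · filter_upwards [eventually_gt_atTop 0] with n hn
    rw [hsPoly_one, if_neg hn.ne']
    simp

lemma Good.has_xy {R : Type u} [CommRing R] [IsLocalRing R] {x y : R} (h : Good R x y) :
    HasHilbCoeffs R (Ideal.span {x + y}) R 1 (fun i => if i = 0 then 1 else -2) := by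
  have key : ∀ n, mlen R (R ⧸ (Ideal.span {x + y} ^ (n + 3) • (⊤ : Submodule R R))) =
      (((n + 5 : ℕ) : ℕ∞) : WithBot ℕ∞) := by
    intro n
    rw [mlen_quot _ (Ideal.span {y ^ (n + 2 + 1)})
      (by rw [Ideal.span_singleton_pow, h.xy_pow]), h.length_yn]
  have h2 : Module.length R (R ⧸ Ideal.span {x + y} ^ 2) ≠ ⊤ := by
    have hle : Ideal.span {y ^ (2 + 1)} ≤ Ideal.span {x + y} ^ 2 := by
      rw [← h.xy_pow 0, Ideal.span_singleton_pow, Ideal.span_singleton_le_span_singleton]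
      exact pow_dvd_pow _ (by omega)
    have h3 := Module.length_le_of_surjective (R := R) (Submodule.factor hle)
      (Submodule.factor_surjective hle)
    rw [h.length_yn 2] at h3
    exact ne_top_of_le_ne_top (ENat.natCast_ne_top _) h3
  obtain ⟨c, hc⟩ := ENat.ne_top_iff_exists.mp h2
  refine ⟨fun n => if n = 0 then 0 else if n = 1 then 2 else if n = 2 then c else n + 2, ?_, ?_⟩
  · rintro (_ | _ | _ | n)
    · simpa using zero_pow_quot (Ideal.span {x + y})
    · rw [mlen_quot _ _ (pow_one _), h.length_xy]
      simp
    · rw [mlen_quot _ _ rfl, ← hc]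
      simp
    · rw [key]
      simp [add_assoc]
  · filter_upwards [eventually_gt_atTop 2] with n hn
    rw [hsPoly_one, if_neg (by omega), if_neg (by omega), if_neg (by omega)]
    simp

lemma Good.param_y {R : Type u} [CommRing R] [IsLocalRing R] {x y : R} (h : Good R x y) :
    IsParameterIdeal R (Ideal.span {y}) 1 R := by
  refine ⟨⟨fun _ => y, by simp⟩, ?_⟩
  rw [mlen_quot _ _ rfl, h.length_y]
  exact WithBot.coe_lt_coe.mpr (ENat.natCast_lt_top 3)

lemma Good.param_xy {R : Type u} [CommRing R] [IsLocalRing R] {x y : R} (h : Good R x y) :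
    IsParameterIdeal R (Ideal.span {x + y}) 1 R := by
  refine ⟨⟨fun _ => x + y, by simp⟩, ?_⟩
  rw [mlen_quot _ _ rfl, h.length_xy]
  exact WithBot.coe_lt_coe.mpr (ENat.natCast_lt_top 2)

lemma Good.not_buchsbaum {R : Type u} [CommRing R] [IsLocalRing R] {x y : R} (h : Good R x y) :
    ¬ IsBuchsbaum R 1 := by
  rintro ⟨c, hc⟩
  have h1 := hc _ h.param_y _ h.has_y 3 (by rw [mlen_quot _ _ rfl, h.length_y]; rfl)
  have h2 := hc _ h.param_xy _ h.has_xy 2 (by rw [mlen_quot _ _ rfl, h.length_xy]; rfl)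
  simp at h1 h2
  omega

end

open MvPowerSeries in
lemma dec_series {k : Type u} [Field k] (F : MvPowerSeries (Fin 2) k) :
    (∃ g, F = X 0 * g) ∨ ∃ (n : ℕ) (u g : MvPowerSeries (Fin 2) k),
      IsUnit u ∧ F = u * X 1 ^ n + X 0 * g := by
  classical
  by_cases hF : ∃ n : ℕ, coeff (Finsupp.single 1 n) F ≠ 0
  · right
    let n := Nat.find hF
    have hn : coeff (Finsupp.single 1 n) F ≠ 0 := Nat.find_spec hF
    have hlt : ∀ m < n, coeff (Finsupp.single 1 m) F = 0 := fun m hm => by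
      simpa using Nat.find_min hF hm
    let G : MvPowerSeries (Fin 2) k := fun m => if m 0 = 0 then coeff m F else 0
    have hG : ∀ m, coeff m G = if m 0 = 0 then coeff m F else 0 := fun m => rfl
    have hs : ∀ m : Fin 2 →₀ ℕ, m 0 = 0 → m = Finsupp.single 1 (m 1) := by
      intro m hm
      ext i
      fin_cases i <;> simp [hm]
    have h1 : (X 1 : MvPowerSeries (Fin 2) k) ^ n ∣ G := by
      rw [X_pow_dvd_iff]
      intro m hm
      rw [hG]
      split_ifs with h0
      · rw [hs m h0]; exact hlt _ hm
      · rfl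
    have h2 : (X 0 : MvPowerSeries (Fin 2) k) ∣ F - G := by
      rw [X_dvd_iff]
      intro m hm
      rw [map_sub, hG, if_pos hm, sub_self]
    obtain ⟨u, hu⟩ := h1
    obtain ⟨g, hg⟩ := h2
    refine ⟨n, u, g, ?_, by rw [← hg, mul_comm u, ← hu]; ring⟩
    rw [isUnit_iff_constantCoeff, isUnit_iff_ne_zero]
    intro h0
    apply hn
    have h3 : coeff (Finsupp.single 1 n) G = coeff (Finsupp.single 1 n) F := by
      rw [hG, if_pos (by simp)]
    rw [← h3, hu, X_pow_eq]
    have := coeff_add_monomial_mul (Finsupp.single (1 : Fin 2) n) 0 u (1 : k)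
    rw [add_zero] at this
    rw [this, coeff_zero_eq_constantCoeff_apply, h0, mul_zero]
  · left
    push Not at hF
    have : (X 0 : MvPowerSeries (Fin 2) k) ∣ F := by
      rw [X_dvd_iff]
      intro m hm
      have : m = Finsupp.single 1 (m 1) := by
        ext i
        fin_cases i <;> simp [hm]
      rw [this]; exact hF _
    exact this

open MvPowerSeries in
lemma good_ex (k : Type u) [Field k] :
    Good (exRing k) (Ideal.Quotient.mk (exIdeal k) (X 0)) (Ideal.Quotient.mk (exIdeal k) (X 1)) := by
  classical
  refine ⟨?_, ?_, ?_, ?_, ?_⟩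
  · rw [← map_pow, Ideal.Quotient.eq_zero_iff_mem]
    refine ⟨?_, Ideal.subset_span (by simp)⟩
    exact Ideal.mem_span_singleton'.mpr ⟨X 0 ^ 2, by ring⟩
  · rw [← map_mul, Ideal.Quotient.eq_zero_iff_mem]
    refine ⟨?_, ?_⟩
    · exact Ideal.mem_span_singleton'.mpr ⟨X 1, by ring⟩
    · exact Ideal.mem_span_pair.mpr ⟨0, X 0, by ring⟩
  · rw [← map_pow, Ne, Ideal.Quotient.eq_zero_iff_mem]
    rintro ⟨-, h2⟩
    obtain ⟨a, b, hab⟩ := Ideal.mem_span_pair.mp h2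
    have h3 := congrArg (coeff (Finsupp.single 0 2)) hab
    rw [map_add, X_pow_dvd_iff.mp (Dvd.intro_left a rfl) _ (by simp),
      X_dvd_iff.mp (Dvd.intro_left b rfl) _ (by simp), coeff_X_pow] at h3
    simp at h3
  · intro n
    rw [← map_pow, Ne, Ideal.Quotient.eq_zero_iff_mem]
    rintro ⟨h2, -⟩
    have h3 := X_dvd_iff.mp (Ideal.mem_span_singleton.mp h2) (Finsupp.single 1 n) (by simp)
    rw [coeff_X_pow] at h3
    simp at h3
  · intro f
    obtain ⟨F, rfl⟩ := Ideal.Quotient.mk_surjective f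
    rcases dec_series F with ⟨g, rfl⟩ | ⟨n, u, g, hu, rfl⟩
    · exact Or.inl ⟨Ideal.Quotient.mk _ g, by rw [map_mul]⟩
    · exact Or.inr ⟨n, Ideal.Quotient.mk _ u, Ideal.Quotient.mk _ g, hu.map _, by
        rw [map_add, map_mul, map_mul, map_pow]⟩

end Ex18

/-- The ring `R = k[[x,y]]/((x) ∩ (x³,y))` is a 1-dimensional generalized Cohen–Macaulay local
ring with `e₀((y),R) = 1`, `λ(R/yR) = 3` and `λ(H⁰_m(R)) = 2`; hence `y` is a standard
parameter (`λ(R/yR) - e₀((y),R) = λ(H⁰_m(R))`), yet `R` is not Buchsbaum. -/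
theorem stmt_18 (k : Type u) [Field k] [IsLocalRing (exRing k)] :
    ringKrullDim (exRing k) = ((1 : ℕ∞) : WithBot ℕ∞) ∧
    mlen (exRing k) (H0 (exRing k) (exRing k)) = ((2 : ℕ∞) : WithBot ℕ∞) ∧
    mlen (exRing k) (exRing k ⧸
        (Ideal.span {Ideal.Quotient.mk (exIdeal k) (MvPowerSeries.X 1)} •
          (⊤ : Submodule (exRing k) (exRing k)))) = ((3 : ℕ∞) : WithBot ℕ∞) ∧
    IsParameterIdeal (exRing k)
      (Ideal.span {Ideal.Quotient.mk (exIdeal k) (MvPowerSeries.X 1)}) 1 (exRing k) ∧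
    (∀ e : ℕ → ℤ, HasHilbCoeffs (exRing k)
        (Ideal.span {Ideal.Quotient.mk (exIdeal k) (MvPowerSeries.X 1)}) (exRing k) 1 e →
      e 0 = 1 ∧ (3 : ℤ) - e 0 = 2) ∧
    ¬ IsBuchsbaum (exRing k) 1 := by
  have h := Ex18.good_ex k
  refine ⟨h.krull, ?_, ?_, h.param_y, ?_, h.not_buchsbaum⟩
  · rw [Ex18.mlen_eq, h.length_H0]
  · rw [Ex18.mlen_quot _ _ rfl, h.length_y]
  · intro e he
    have h1 := h.hilb_coeffs e he
    exact ⟨h1, by rw [h1]; norm_num⟩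
end
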